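/- Let f : ℝ → ℝ be smooth and let u_0 ∈ L^∞(ℝ). The global Kruzkov entropy solution u of u_t + f(u)_x = 0, u(0,x) = u_0(x), can be represented as u(t,x) = U(t, α(t,x)), where α(t,·) is a locally bounded monotone increasing function of x (representing the generalized characteristics), and U(t,·), as a function of α, satisfies |∂_α U(t,·)|_{BV(ℝ)} ≤ |u_0'|_{BV(ℝ)} whenever the right-hand side is finite, and, for every 1 < p ≤ ∞, |∂_α U(t,·)|_{L^p(ℝ)} ≤ |u_0'|_{L^p(ℝ)} whenever the right-hand side is finite; in particular U(t,·) is then Hölder continuous in α. -/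

import Mathlib

open MeasureTheory
open scoped ENNReal NNReal

/-- `u` is a Kruzkov entropy solution of `u_t + f(u)_x = 0`, `u(0,·) = u₀`:
for every `k ∈ ℝ` and every nonnegative smooth compactly supported `φ`,
`∫∫_{t ≥ 0} (|u-k| φ_t + sign(u-k)(f(u)-f(k)) φ_x) + ∫ |u₀-k| φ(0,·) ≥ 0`. -/
def IsKruzkovSolution (f : ℝ → ℝ) (u₀ : ℝ → ℝ) (u : ℝ → ℝ → ℝ) : Prop :=
  ∀ (k : ℝ) (φ : ℝ × ℝ → ℝ), ContDiff ℝ (⊤ : ℕ∞) φ → HasCompactSupport φ →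
    (∀ q, 0 ≤ φ q) →
    0 ≤ (∫ q in Set.Ici (0:ℝ) ×ˢ (Set.univ : Set ℝ),
          (|u q.1 q.2 - k| * deriv (fun s => φ (s, q.2)) q.1
            + Real.sign (u q.1 q.2 - k) * (f (u q.1 q.2) - f k)
                * deriv (fun y => φ (q.1, y)) q.2))
        + ∫ x, |u₀ x - k| * φ (0, x)

/-!
On the staggered Lax–Friedrichs lattice each new value lies between its two neighbours, so by the
intermediate value theorem it is attained by `u₀` between the two corresponding points: at every
time the scheme is a monotone rearrangement `u₀ ∘ Y`, with `|Y x - x| ≲ t` up to the mesh width.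
Each value of the scheme is a constant, which Kruzkov's inequality for `u` may be tested against;
summing over the sites seen by a kernel around each point, the discrete entropy inequality cancels
the flux terms up to a Taylor remainder, and a damped weight on a cone absorbs the truncation. This
bounds the `L¹` distance of `u` to the scheme averaged over the offsets of the sites, hence to the
scheme at one offset. An ultrafilter limit of the maps `Y` is then a monotone map `α t` with
`u t = u₀ ∘ α t`, so `U t = u₀` has the required derivative `u₀'`.
-/

open Set Filter
open scoped Topology

section EntropyPair

variable {f : ℝ → ℝ} {s : Set ℝ} {L : ℝ≥0} {a b k : ℝ}

/-- Kruzkov's entropy–flux pair `(|a - k|, sign (a - k) * (f a - f k))`, encoded as a vector of the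
`(t, x)`-plane: the entropy inequality becomes a statement on `fderiv ℝ φ q (entropyVec f k a)`. -/
noncomputable def entropyVec (f : ℝ → ℝ) (k a : ℝ) : ℝ × ℝ :=
  (|a - k|, Real.sign (a - k) * (f a - f k))

lemma entropyVec_comm (f : ℝ → ℝ) (k a : ℝ) : entropyVec f k a = entropyVec f a k := by
  have hsign : Real.sign (a - k) = -Real.sign (k - a) := by rw [← Real.sign_neg, neg_sub]
  rw [entropyVec, entropyVec, abs_sub_comm, hsign]
  ring_nf

lemma measurable_entropyVec (hf : Measurable f) (k : ℝ) : Measurable (entropyVec f k) := by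
  have hsign : Measurable Real.sign :=
    Measurable.ite measurableSet_Iio measurable_const
      (Measurable.ite measurableSet_Ioi measurable_const measurable_const)
  exact (measurable_id.sub_const k).abs.prodMk
    ((hsign.comp (measurable_id.sub_const k)).mul (hf.sub_const _))

lemma abs_entropyVec_snd_le (hf : LipschitzOnWith L f s) (ha : a ∈ s) (hk : k ∈ s) :
    |(entropyVec f k a).2| ≤ L * (entropyVec f k a).1 := by
  have hsign : |Real.sign (a - k)| ≤ 1 := by
    rcases Real.sign_apply_eq (a - k) with h | h | h <;> simp [h]
  calc |Real.sign (a - k) * (f a - f k)| = |Real.sign (a - k)| * |f a - f k| := abs_mul _ _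
    _ ≤ |f a - f k| := mul_le_of_le_one_left (abs_nonneg _) hsign
    _ ≤ L * |a - k| := by simpa [Real.dist_eq] using hf.dist_le_mul a ha k hk

lemma abs_add_eq_abs_add_sign_mul (hab : |b| ≤ |a|) : |a + b| = |a| + Real.sign a * b := by
  have hb := abs_le.1 hab
  rcases lt_trichotomy a 0 with ha | rfl | ha
  · rw [abs_of_neg ha] at *
    rw [Real.sign_of_neg ha, abs_of_nonpos (by linarith)]
    ring
  · simp_all
  · rw [abs_of_pos ha] at *
    rw [Real.sign_of_pos ha, abs_of_nonneg (by linarith)]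
    ring

end EntropyPair

section LaxFriedrichs

variable {f u₀ : ℝ → ℝ} {s : Set ℝ} {L : ℝ≥0} {a b k lam δ : ℝ}

/-- One step of the Lax–Friedrichs scheme with neighbouring values `a` and `b`; `lam` is the ratio
of the time step to the space step. -/
noncomputable def laxFriedrichsStep (f : ℝ → ℝ) (lam a b : ℝ) : ℝ :=
  (a + b) / 2 - lam * (f b - f a)

/-- The staggered Lax–Friedrichs approximation of `u_t + f(u)_x = 0`, `u(0, ·) = u₀`. The value with
indices `(n, j)` sits at time `n * lam * δ` and position `(j + n / 2) * δ`, see `latticeSite`. -/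
noncomputable def laxFriedrichs (f u₀ : ℝ → ℝ) (lam δ : ℝ) : ℕ → ℤ → ℝ
  | 0, j => u₀ (j * δ)
  | n + 1, j => laxFriedrichsStep f lam (laxFriedrichs f u₀ lam δ n j)
      (laxFriedrichs f u₀ lam δ n (j + 1))

lemma abs_mul_sub_le_half (hf : LipschitzOnWith L f s) (hlam : 0 ≤ lam) (hcfl : 2 * lam * L ≤ 1)
    (ha : a ∈ s) (hb : b ∈ s) : |lam * (f a - f b)| ≤ |a - b| / 2 := by
  have hfab : |f a - f b| ≤ L * |a - b| := by simpa [Real.dist_eq] using hf.dist_le_mul a ha b hb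
  rw [abs_mul, abs_of_nonneg hlam]
  nlinarith [abs_nonneg (a - b)]

lemma abs_mul_entropyVec_snd_le_half (hf : LipschitzOnWith L f s) (hlam : 0 ≤ lam)
    (hcfl : 2 * lam * L ≤ 1) (ha : a ∈ s) (hk : k ∈ s) :
    |lam * (entropyVec f k a).2| ≤ (entropyVec f k a).1 / 2 := by
  have hflux := abs_entropyVec_snd_le hf ha hk
  have hent : 0 ≤ (entropyVec f k a).1 := abs_nonneg _
  rw [abs_mul, abs_of_nonneg hlam]
  nlinarith

lemma abs_laxFriedrichsStep_sub_le (hf : LipschitzOnWith L f s) (hlam : 0 ≤ lam)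
    (hcfl : 2 * lam * L ≤ 1) (ha : a ∈ s) (hb : b ∈ s) (hk : k ∈ s) :
    |laxFriedrichsStep f lam a b - k| ≤
      ((entropyVec f k a).1 / 2 + lam * (entropyVec f k a).2) +
        ((entropyVec f k b).1 / 2 - lam * (entropyVec f k b).2) := by
  have habs : ∀ c ∈ s, ∀ σ : ℝ, |σ| ≤ 1 →
      |(c - k) / 2 + σ * (lam * (f c - f k))| =
        (entropyVec f k c).1 / 2 + σ * (lam * (entropyVec f k c).2) := by
    intro c hc σ hσ
    have hsmall : |2 * (σ * (lam * (f c - f k)))| ≤ |c - k| := by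
      rw [abs_mul, abs_mul, abs_two]
      have := abs_mul_sub_le_half hf hlam hcfl hc hk
      nlinarith [abs_nonneg (lam * (f c - f k))]
    have := abs_add_eq_abs_add_sign_mul hsmall
    rw [show (c - k) / 2 + σ * (lam * (f c - f k)) = (c - k + 2 * (σ * (lam * (f c - f k)))) / 2
      by ring, abs_div, this, abs_two, entropyVec]
    ring
  calc |laxFriedrichsStep f lam a b - k|
      = |((a - k) / 2 + 1 * (lam * (f a - f k))) + ((b - k) / 2 + -1 * (lam * (f b - f k)))| := by
        rw [laxFriedrichsStep]; ring_nf
    _ ≤ _ := abs_add_le _ _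
    _ = _ := by rw [habs a ha 1 (by simp), habs b hb (-1) (by simp)]; ring

lemma laxFriedrichsStep_mem_uIcc (hf : LipschitzOnWith L f s) (hlam : 0 ≤ lam)
    (hcfl : 2 * lam * L ≤ 1) (ha : a ∈ s) (hb : b ∈ s) :
    laxFriedrichsStep f lam a b ∈ uIcc a b := by
  have hflux := abs_le.1 (abs_mul_sub_le_half hf hlam hcfl hb ha)
  rw [mem_uIcc, laxFriedrichsStep]
  rcases le_total a b with hab | hab
  · rw [abs_of_nonneg (sub_nonneg.2 hab)] at hflux
    exact .inl ⟨by linarith, by linarith⟩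
  · rw [abs_of_nonpos (sub_nonpos.2 hab)] at hflux
    exact .inr ⟨by linarith, by linarith⟩

lemma laxFriedrichs_mem [s.OrdConnected] (hf : LipschitzOnWith L f s) (hlam : 0 ≤ lam)
    (hcfl : 2 * lam * L ≤ 1) (hu₀ : ∀ x, u₀ x ∈ s) (n : ℕ) (j : ℤ) :
    laxFriedrichs f u₀ lam δ n j ∈ s := by
  induction n generalizing j with
  | zero => exact hu₀ _
  | succ n ih =>
    exact OrdConnected.uIcc_subset ‹_› (ih j) (ih (j + 1))
      (laxFriedrichsStep_mem_uIcc hf hlam hcfl (ih j) (ih (j + 1)))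

/-- Each new value lies between two neighbouring ones, so by the intermediate value theorem it is
attained by `u₀` between the two corresponding points. -/
lemma exists_monotone_laxFriedrichs_eq [s.OrdConnected] (hf : LipschitzOnWith L f s)
    (hlam : 0 ≤ lam) (hcfl : 2 * lam * L ≤ 1) (hu₀ : ∀ x, u₀ x ∈ s) (hc : Continuous u₀)
    (hδ : 0 ≤ δ) (n : ℕ) :
    ∃ Y : ℤ → ℝ, Monotone Y ∧ (∀ j, laxFriedrichs f u₀ lam δ n j = u₀ (Y j)) ∧
      ∀ j : ℤ, |Y j - (j + n / 2) * δ| ≤ n * δ / 2 := by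
  induction n with
  | zero =>
    exact ⟨fun j => j * δ, fun i j hij => mul_le_mul_of_nonneg_right (by exact_mod_cast hij) hδ,
      fun j => rfl, fun j => by simp⟩
  | succ n ih =>
    obtain ⟨Y, hmono, hY, hclose⟩ := ih
    have hivt : ∀ j, ∃ z ∈ Icc (Y j) (Y (j + 1)),
        u₀ z = laxFriedrichs f u₀ lam δ (n + 1) j := by
      intro j
      have hmem := laxFriedrichsStep_mem_uIcc hf hlam hcfl (hu₀ (Y j)) (hu₀ (Y (j + 1)))
      rw [← hY, ← hY] at hmem
      rw [← uIcc_of_le (hmono (Int.le_add_one le_rfl))]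
      exact intermediate_value_uIcc hc.continuousOn (by rwa [← hY, ← hY])
    choose Z hZY hZ using hivt
    refine ⟨Z, monotone_int_of_le_succ fun j => (hZY j).2.trans (hZY (j + 1)).1,
      fun j => (hZ j).symm, fun j => ?_⟩
    have h₁ := abs_le.1 (hclose j)
    have h₂ := abs_le.1 (hclose (j + 1))
    obtain ⟨h₃, h₄⟩ := hZY j
    push_cast at *
    exact abs_le.2 ⟨by linarith, by linarith⟩

end LaxFriedrichs

section SummationByParts

variable {p m χ : ℕ → ℤ → ℝ} {N : ℕ} {J : ℤ}

lemma sum_Icc_mul_sub_one (c χ : ℤ → ℝ) (hχ : ∀ j, χ j ≠ 0 → |j| < J) :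
    ∑ j ∈ Finset.Icc (-J) J, c j * χ (j - 1) = ∑ j ∈ Finset.Icc (-J) J, c (j + 1) * χ j := by
  have hmem : ∀ j, χ j ≠ 0 → j ∈ Finset.Icc (-J) J ∧ j + 1 ∈ Finset.Icc (-J) J := by
    intro j hj
    have := abs_lt.1 (hχ j hj)
    simp only [Finset.mem_Icc]
    omega
  refine Finset.sum_bij_ne_zero (fun j _ _ => j - 1)
    (fun j _ hj => (hmem _ (right_ne_zero_of_mul hj)).1) (fun _ _ _ _ _ _ h => by simpa using h)
    (fun j _ hj => ⟨j + 1, (hmem _ (right_ne_zero_of_mul hj)).2, by simpa using hj, by simp⟩)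
    (fun j _ _ => by simp)

/-- Discrete entropy inequality: telescoping in `n` after shifting the `m`-terms by one in `j`. -/
lemma sum_mul_sub_nonneg_of_step_le
    (hstep : ∀ n j, p (n + 1) j + m (n + 1) j ≤ p n j + m n (j + 1)) (hχ : ∀ n j, 0 ≤ χ n j)
    (hsupp : ∀ n j, χ n j ≠ 0 → 0 < n ∧ n < N ∧ |j| < J) :
    0 ≤ ∑ i ∈ Finset.range N ×ˢ Finset.Icc (-J) J,
      (p i.1 i.2 * (χ (i.1 + 1) i.2 - χ i.1 i.2) +
        m i.1 i.2 * (χ (i.1 + 1) (i.2 - 1) - χ i.1 i.2)) := by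
  set T : ℕ → ℝ := fun n => ∑ j ∈ Finset.Icc (-J) J, (p n j + m n j) * χ n j with hT
  have hzero : ∀ n, ¬ (0 < n ∧ n < N) → T n = 0 := fun n hn =>
    Finset.sum_eq_zero fun j _ => by
      rw [by_contra fun h => hn ((hsupp n j h).imp_right And.left), mul_zero]
  rw [Finset.sum_product]
  calc (0 : ℝ) = ∑ n ∈ Finset.range N, (T (n + 1) - T n) := by
        rw [Finset.sum_range_sub, hzero N (by simp), hzero 0 (by simp), sub_zero]
    _ ≤ _ := Finset.sum_le_sum fun n _ => ?_
  have hshift := sum_Icc_mul_sub_one (m n) (χ (n + 1)) fun j hj => (hsupp _ j hj).2.2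
  calc T (n + 1) - T n
      ≤ ∑ j ∈ Finset.Icc (-J) J, (p n j + m n (j + 1)) * χ (n + 1) j - T n :=
        sub_le_sub_right (Finset.sum_le_sum fun j _ =>
          mul_le_mul_of_nonneg_right (hstep n j) (hχ _ _)) _
    _ = _ := by
        simp only [hT, add_mul, mul_sub, Finset.sum_add_distrib, Finset.sum_sub_distrib, ← hshift]
        ring

end SummationByParts

section Taylor

variable {E : Type*} [NormedAddCommGroup E] [NormedSpace ℝ E] {κ : E → ℝ}

lemma exists_abs_sub_sub_fderiv_le (hκ : ContDiff ℝ 2 κ) (hc : HasCompactSupport κ) :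
    ∃ C : ℝ≥0, ∀ z w, |κ (z + w) - κ z - fderiv ℝ κ z w| ≤ C * ‖w‖ ^ 2 := by
  obtain ⟨C, hC⟩ := ContDiff.lipschitzWith_of_hasCompactSupport (hc.fderiv ℝ)
    (hκ.fderiv_right (m := 1) (by norm_num)) one_ne_zero
  refine ⟨C, fun z w => ?_⟩
  have hbound : ∀ y ∈ Metric.closedBall z ‖w‖, ‖fderiv ℝ κ y - fderiv ℝ κ z‖ ≤ C * ‖w‖ := by
    intro y hy
    rw [← dist_eq_norm]
    exact (hC.dist_le_mul y z).trans (by gcongr; exact hy)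
  have := (convex_closedBall z ‖w‖).norm_image_sub_le_of_norm_fderiv_le'
    (fun y _ => hκ.differentiable two_ne_zero y) hbound
    (Metric.mem_closedBall_self (norm_nonneg w)) (y := z + w) (by simp)
  simpa [pow_two, mul_assoc] using this

lemma mul_sub_add_mul_sub_le_fderiv {C : ℝ≥0}
    (hC : ∀ z w, |κ (z + w) - κ z - fderiv ℝ κ z w| ≤ C * ‖w‖ ^ 2) {p m r : ℝ} (hp : 0 ≤ p)
    (hm : 0 ≤ m) {v w : E} (hv : ‖v‖ ≤ r) (hw : ‖w‖ ≤ r) (z : E) :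
    p * (κ (z + v) - κ z) + m * (κ (z + w) - κ z) ≤
      fderiv ℝ κ z (p • v + m • w) + (p + m) * (C * r ^ 2) := by
  have hremainder : ∀ y, ‖y‖ ≤ r → κ (z + y) - κ z ≤ fderiv ℝ κ z y + C * r ^ 2 := by
    intro y hy
    have := (le_abs_self _).trans (hC z y)
    have : (C : ℝ) * ‖y‖ ^ 2 ≤ C * r ^ 2 := by gcongr
    linarith
  rw [map_add, map_smul, map_smul, smul_eq_mul, smul_eq_mul]
  nlinarith [mul_le_mul_of_nonneg_left (hremainder v hv) hp,
    mul_le_mul_of_nonneg_left (hremainder w hw) hm]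

end Taylor

section Consistency

variable {f u₀ : ℝ → ℝ} {s : Set ℝ} {L C : ℝ≥0} {k lam δ : ℝ} {κ : ℝ × ℝ → ℝ} {N : ℕ} {J : ℤ}

/-- The point `(t, x)` at which the scheme `laxFriedrichs f u₀ lam δ` takes its value with
indices `(n, j)`. -/
noncomputable def latticeSite (lam δ : ℝ) (i : ℕ × ℤ) : ℝ × ℝ :=
  (i.1 * (lam * δ), (i.2 + i.1 / 2) * δ)

lemma latticeSite_succ (lam δ : ℝ) (n : ℕ) (j : ℤ) :
    latticeSite lam δ (n + 1, j) = latticeSite lam δ (n, j) + (lam * δ, δ / 2) := by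
  ext <;> simp [latticeSite] <;> ring

lemma latticeSite_succ_sub_one (lam δ : ℝ) (n : ℕ) (j : ℤ) :
    latticeSite lam δ (n + 1, j - 1) = latticeSite lam δ (n, j) + (lam * δ, -(δ / 2)) := by
  ext <;> simp [latticeSite] <;> ring

/-- The entropy leaving a site along its two outgoing edges adds up to `lam * δ` times the entropy
vector, so only the Taylor remainder of `κ` is left. -/
lemma mul_sub_add_mul_sub_le_fderiv_entropyVec (hs : Bornology.IsBounded s)
    (hf : LipschitzOnWith L f s) (hlam : 0 < lam) (hcfl : 2 * lam * L ≤ 1) (hδ : 0 < δ)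
    (hC : ∀ z w, |κ (z + w) - κ z - fderiv ℝ κ z w| ≤ C * ‖w‖ ^ 2) {a : ℝ} (ha : a ∈ s)
    (hk : k ∈ s) (z : ℝ × ℝ) :
    ((entropyVec f k a).1 / 2 + lam * (entropyVec f k a).2) *
        (κ (z + (lam * δ, δ / 2)) - κ z) +
      ((entropyVec f k a).1 / 2 - lam * (entropyVec f k a).2) *
        (κ (z + (lam * δ, -(δ / 2))) - κ z) ≤
      lam * δ * (fderiv ℝ κ z (entropyVec f k a) +
        Metric.diam s * C * (lam + 1 / 2) ^ 2 * δ / lam) := by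
  set E := entropyVec f k a
  have hE₂ := abs_le.1 (abs_mul_entropyVec_snd_le_half hf hlam.le hcfl ha hk)
  have hE₁ : E.1 ≤ Metric.diam s := Metric.dist_le_diam_of_mem hs ha hk
  have hlamδ := mul_pos hlam hδ
  have hnorm : ∀ b, |b| = δ / 2 → ‖(lam * δ, b)‖ ≤ (lam + 1 / 2) * δ := by
    intro b hb
    rw [Prod.norm_mk, Real.norm_of_nonneg hlamδ.le, Real.norm_eq_abs, hb]
    exact max_le (by linarith) (by linarith)
  have hδ₂ : |δ / 2| = δ / 2 := abs_of_pos (half_pos hδ)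
  have htaylor := mul_sub_add_mul_sub_le_fderiv hC (p := E.1 / 2 + lam * E.2)
    (m := E.1 / 2 - lam * E.2) (by linarith) (by linarith) (hnorm (δ / 2) hδ₂)
    (hnorm (-(δ / 2)) (by rwa [abs_neg])) z
  have hvec : (E.1 / 2 + lam * E.2) • (lam * δ, δ / 2) +
      (E.1 / 2 - lam * E.2) • (lam * δ, -(δ / 2)) = (lam * δ) • E := by
    ext <;> simp <;> ring
  rw [hvec, map_smul, smul_eq_mul] at htaylor
  calc _ ≤ _ := htaylor
    _ = lam * δ * fderiv ℝ κ z E + E.1 * (C * ((lam + 1 / 2) * δ) ^ 2) := by ring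
    _ ≤ lam * δ * fderiv ℝ κ z E + Metric.diam s * (C * ((lam + 1 / 2) * δ) ^ 2) := by gcongr
    _ = _ := by field_simp

lemma sum_neg_fderiv_entropyVec_le [s.OrdConnected] (hs : Bornology.IsBounded s)
    (hf : LipschitzOnWith L f s) (hlam : 0 < lam) (hcfl : 2 * lam * L ≤ 1) (hu₀ : ∀ x, u₀ x ∈ s)
    (hδ : 0 < δ) (hκ : ∀ z, 0 ≤ κ z)
    (hC : ∀ z w, |κ (z + w) - κ z - fderiv ℝ κ z w| ≤ C * ‖w‖ ^ 2) (hk : k ∈ s) {q : ℝ × ℝ}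
    (hsupp : ∀ i, κ (latticeSite lam δ i - q) ≠ 0 → 0 < i.1 ∧ i.1 < N ∧ |i.2| < J) :
    ∑ i ∈ Finset.range N ×ˢ Finset.Icc (-J) J, -fderiv ℝ κ (latticeSite lam δ i - q)
        (entropyVec f k (laxFriedrichs f u₀ lam δ i.1 i.2)) ≤
      (Finset.range N ×ˢ Finset.Icc (-J) J).card *
        (Metric.diam s * C * (lam + 1 / 2) ^ 2 * δ / lam) := by
  have hmem := laxFriedrichs_mem (δ := δ) hf hlam.le hcfl hu₀
  set E : ℕ → ℤ → ℝ × ℝ := fun n j => entropyVec f k (laxFriedrichs f u₀ lam δ n j)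
  have hstep : ∀ n j, ((E (n + 1) j).1 / 2 + lam * (E (n + 1) j).2) +
      ((E (n + 1) j).1 / 2 - lam * (E (n + 1) j).2) ≤
      ((E n j).1 / 2 + lam * (E n j).2) + ((E n (j + 1)).1 / 2 - lam * (E n (j + 1)).2) :=
    fun n j => by
      rw [add_add_sub_cancel, add_halves]
      exact abs_laxFriedrichsStep_sub_le hf hlam.le hcfl (hmem n j) (hmem n (j + 1)) hk
  have hparts := sum_mul_sub_nonneg_of_step_le (p := fun n j => (E n j).1 / 2 + lam * (E n j).2)
    (m := fun n j => (E n j).1 / 2 - lam * (E n j).2)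
    (χ := fun n j => κ (latticeSite lam δ (n, j) - q))
    hstep (fun n j => hκ _) (fun n j => hsupp (n, j))
  simp only [latticeSite_succ_sub_one] at hparts
  simp only [latticeSite_succ, add_sub_right_comm] at hparts
  have hsum := hparts.trans (Finset.sum_le_sum fun i _ =>
    mul_sub_add_mul_sub_le_fderiv_entropyVec hs hf hlam hcfl hδ hC (hmem i.1 i.2) hk _)
  rw [← Finset.mul_sum] at hsum
  have := nonneg_of_mul_nonneg_right hsum (mul_pos hlam hδ)
  rw [Finset.sum_add_distrib, Finset.sum_const, nsmul_eq_mul] at this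
  rw [Finset.sum_neg_distrib]
  linarith

end Consistency

section Integrability

variable {X E : Type*} [TopologicalSpace X] [MeasurableSpace X] [OpensMeasurableSpace X]
  {μ : Measure X} [IsFiniteMeasureOnCompacts μ] [NormedAddCommGroup E] [NormedSpace ℝ E]

lemma integrable_clm_apply_of_hasCompactSupport [SecondCountableTopologyEither X (E →L[ℝ] ℝ)]
    {l : X → E →L[ℝ] ℝ} (hl : Continuous l) (hc : HasCompactSupport l) {w : X → E}
    (hw : AEStronglyMeasurable w μ) {M : ℝ} (hM : ∀ᵐ q ∂μ, ‖w q‖ ≤ M) :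
    Integrable (fun q => l q (w q)) μ := by
  refine ((hl.norm.integrable_of_hasCompactSupport hc.norm).mul_const M).mono'
    ((ContinuousLinearMap.id ℝ (E →L[ℝ] ℝ)).aestronglyMeasurable_comp₂
      hl.aestronglyMeasurable hw) ?_
  filter_upwards [hM] with q hq
  exact ((l q).le_opNorm _).trans (by gcongr)

end Integrability

/-- The closed half-plane `t ≥ 0` of the `(t, x)`-plane. -/
abbrev halfPlane : Set (ℝ × ℝ) := Ici (0 : ℝ) ×ˢ univ

lemma measurableSet_halfPlane : MeasurableSet halfPlane :=
  measurableSet_Ici.prod MeasurableSet.univ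

lemma IsKruzkovSolution.setIntegral_fderiv_nonneg {f u₀ : ℝ → ℝ} {u : ℝ → ℝ → ℝ}
    (h : IsKruzkovSolution f u₀ u) (k : ℝ) {φ : ℝ × ℝ → ℝ} (hφ : ContDiff ℝ (⊤ : ℕ∞) φ)
    (hc : HasCompactSupport φ) (h₀ : ∀ q, 0 ≤ φ q) :
    0 ≤ (∫ q in halfPlane, fderiv ℝ φ q (entropyVec f k (u q.1 q.2))) +
      ∫ x, |u₀ x - k| * φ (0, x) := by
  convert h k φ hφ hc h₀ using 4 with q
  have hfd := (hφ.differentiable (by simp) q).hasFDerivAt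
  have ht : HasDerivAt (fun r => φ (r, q.2)) (fderiv ℝ φ q (1, 0)) q.1 :=
    hfd.comp_hasDerivAt q.1 ((hasDerivAt_id q.1).prodMk (hasDerivAt_const q.1 q.2))
  have hx : HasDerivAt (fun y => φ (q.1, y)) (fderiv ℝ φ q (0, 1)) q.2 :=
    hfd.comp_hasDerivAt q.2 ((hasDerivAt_const q.2 q.1).prodMk (hasDerivAt_id q.2))
  rw [ht.deriv, hx.deriv, ← smul_eq_mul, ← smul_eq_mul (_ * _), ← map_smul, ← map_smul, ← map_add]
  simp [entropyVec]

/-- A smooth weight whose decay in time dominates entropy transport inside the cone of speed `L`;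
its support in `t ≥ 0` lies within distance `X` of the origin. -/
structure IsDampedWeight (L : ℝ≥0) (X : ℝ) (ψ : ℝ × ℝ → ℝ) : Prop where
  contDiff : ContDiff ℝ (⊤ : ℕ∞) ψ
  nonneg : ∀ q, 0 ≤ ψ q
  norm_le : ∀ q ∈ halfPlane, ψ q ≠ 0 → ‖q‖ ≤ X
  fderiv_le : ∀ q w, |w.2| ≤ (L : ℝ) * w.1 → fderiv ℝ ψ q w ≤ -w.1 * ψ q

namespace IsDampedWeight

variable {L : ℝ≥0} {X : ℝ} {ψ : ℝ × ℝ → ℝ}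

lemma integrableOn (hψ : IsDampedWeight L X ψ) : IntegrableOn ψ halfPlane :=
  (hψ.contDiff.continuous.continuousOn.integrableOn_compact
    (isCompact_closedBall 0 X)).of_forall_sdiff_eq_zero measurableSet_halfPlane fun q hq => by
      by_contra h
      exact hq.2 (mem_closedBall_zero_iff.2 (hψ.norm_le q hq.1 h))

lemma hasCompactSupport_init (hψ : IsDampedWeight L X ψ) :
    HasCompactSupport fun x => ψ (0, x) :=
  HasCompactSupport.intro (isCompact_Icc (a := -X) (b := X)) fun x hx => by
    by_contra h
    exact hx (abs_le.1 ((norm_snd_le (0, x)).trans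
      (hψ.norm_le (0, x) ⟨self_mem_Ici, mem_univ _⟩ h)))

lemma integrable_init_mul (hψ : IsDampedWeight L X ψ) {χ : ℝ × ℝ → ℝ} (hχ : Continuous χ) :
    Integrable fun x => ψ (0, x) * χ (0, x) :=
  ((hψ.contDiff.continuous.mul hχ).comp
    (Continuous.prodMk_right 0)).integrable_of_hasCompactSupport hψ.hasCompactSupport_init.mul_right

end IsDampedWeight

/-- A bounded Kruzkov solution with all values in `s`, on which the flux is `L`-Lipschitz. -/
structure IsEntropySolutionOn (L : ℝ≥0) (s : Set ℝ) (f u₀ : ℝ → ℝ) (u : ℝ → ℝ → ℝ) : Prop where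
  isBounded : Bornology.IsBounded s
  lipschitzOnWith : LipschitzOnWith L f s
  measurable_flux : Measurable f
  measurable_init : Measurable u₀
  init_mem : ∀ x, u₀ x ∈ s
  measurable : Measurable (Function.uncurry u)
  mem : ∀ t x, 0 ≤ t → u t x ∈ s
  isKruzkovSolution : IsKruzkovSolution f u₀ u

namespace IsEntropySolutionOn

variable {L : ℝ≥0} {X k : ℝ} {ψ χ : ℝ × ℝ → ℝ} {s : Set ℝ} {f u₀ : ℝ → ℝ} {u : ℝ → ℝ → ℝ}

lemma measurable_apply (hu : IsEntropySolutionOn L s f u₀ u) :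
    Measurable fun q : ℝ × ℝ => u q.1 q.2 := hu.measurable

lemma norm_entropyVec_le (hu : IsEntropySolutionOn L s f u₀ u) (hk : k ∈ s) {q : ℝ × ℝ}
    (hq : q ∈ halfPlane) : ‖entropyVec f k (u q.1 q.2)‖ ≤ max 1 (L : ℝ) * Metric.diam s := by
  have hmem := hu.mem q.1 q.2 hq.1
  have h₁ : (entropyVec f k (u q.1 q.2)).1 ≤ Metric.diam s :=
    Metric.dist_le_diam_of_mem hu.isBounded hmem hk
  have h₂ := abs_entropyVec_snd_le hu.lipschitzOnWith hmem hk
  have h₀ : 0 ≤ (entropyVec f k (u q.1 q.2)).1 := abs_nonneg _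
  rw [Prod.norm_def, Real.norm_of_nonneg h₀, Real.norm_eq_abs]
  exact max_le (by nlinarith [le_max_left 1 (L : ℝ)])
    (h₂.trans (by gcongr; exact le_max_right _ _))

lemma integrableOn_clm_entropyVec (hu : IsEntropySolutionOn L s f u₀ u) (hk : k ∈ s)
    {l : ℝ × ℝ → ℝ × ℝ →L[ℝ] ℝ} (hl : Continuous l) (hc : HasCompactSupport l) :
    IntegrableOn (fun q => l q (entropyVec f k (u q.1 q.2))) halfPlane :=
  integrable_clm_apply_of_hasCompactSupport hl hc
    ((measurable_entropyVec hu.measurable_flux k).comp hu.measurable_apply).aestronglyMeasurable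
    (ae_restrict_of_forall_mem measurableSet_halfPlane fun _ hq => hu.norm_entropyVec_le hk hq)

lemma integrable_abs_init_sub_mul (hu : IsEntropySolutionOn L s f u₀ u) (hk : k ∈ s) {g : ℝ → ℝ}
    (hg : Integrable g) : Integrable fun x => |u₀ x - k| * g x :=
  hg.bdd_mul (c := Metric.diam s) (hu.measurable_init.sub_const k).abs.aestronglyMeasurable
    (.of_forall fun x => by
      rw [Real.norm_eq_abs, abs_abs]
      exact Metric.dist_le_diam_of_mem hu.isBounded (hu.init_mem x) hk)

lemma integrableOn_abs_sub_mul (hu : IsEntropySolutionOn L s f u₀ u) {w : ℝ × ℝ → ℝ}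
    (hw : Measurable w) (hws : ∀ q, w q ∈ s) {g : ℝ × ℝ → ℝ} (hg : IntegrableOn g halfPlane) :
    IntegrableOn (fun q => |u q.1 q.2 - w q| * g q) halfPlane :=
  Integrable.bdd_mul (c := Metric.diam s) hg (hu.measurable_apply.sub hw).abs.aestronglyMeasurable
    (ae_restrict_of_forall_mem measurableSet_halfPlane fun q hq => by
      rw [Real.norm_eq_abs, abs_abs]
      exact Metric.dist_le_diam_of_mem hu.isBounded (hu.mem q.1 q.2 hq.1) (hws q))

/-- The decay of `ψ` absorbs the entropy flux. -/
lemma setIntegral_abs_sub_mul_le (hu : IsEntropySolutionOn L s f u₀ u) (hk : k ∈ s)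
    (hψ : IsDampedWeight L X ψ) (hχ : ContDiff ℝ (⊤ : ℕ∞) χ) (hc : HasCompactSupport χ)
    (hχ₀ : ∀ z, 0 ≤ χ z) :
    ∫ q in halfPlane, |u q.1 q.2 - k| * (ψ q * χ q) ≤
      (∫ q in halfPlane, ψ q * fderiv ℝ χ q (entropyVec f k (u q.1 q.2))) +
        ∫ x, |u₀ x - k| * (ψ (0, x) * χ (0, x)) := by
  set E : ℝ × ℝ → ℝ × ℝ := fun q => entropyVec f k (u q.1 q.2) with hE
  have hfderiv : ∀ q, fderiv ℝ (fun q => ψ q * χ q) q = ψ q • fderiv ℝ χ q + χ q • fderiv ℝ ψ q :=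
    fun q => fderiv_fun_mul (hψ.contDiff.differentiable (by simp) q)
      (hχ.differentiable (by simp) q)
  have hψ' := hψ.contDiff.continuous_fderiv (by simp)
  have hint_transport : IntegrableOn (fun q => (ψ q • fderiv ℝ χ q) (E q)) halfPlane :=
    hu.integrableOn_clm_entropyVec hk
      (hψ.contDiff.continuous.smul (hχ.continuous_fderiv (by simp)))
      ((hc.fderiv ℝ).smul_left (f := ψ))
  have hint_damp : IntegrableOn (fun q => (χ q • fderiv ℝ ψ q) (E q)) halfPlane :=
    hu.integrableOn_clm_entropyVec hk (hχ.continuous.smul hψ')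
      (hc.smul_right (f' := fderiv ℝ ψ))
  have hint : IntegrableOn (fun q => |u q.1 q.2 - k| * (ψ q * χ q)) halfPlane :=
    hu.integrableOn_abs_sub_mul measurable_const (fun _ => hk)
      ((hψ.contDiff.continuous.mul hχ.continuous).integrable_of_hasCompactSupport
        hc.mul_left).integrableOn
  have hdamp : ∫ q in halfPlane, (χ q • fderiv ℝ ψ q) (E q) ≤
      -∫ q in halfPlane, |u q.1 q.2 - k| * (ψ q * χ q) := by
    rw [← integral_neg]
    refine setIntegral_mono_on hint_damp hint.neg measurableSet_halfPlane fun q hq => ?_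
    have := mul_le_mul_of_nonneg_left (hψ.fderiv_le q (E q)
      (abs_entropyVec_snd_le hu.lipschitzOnWith (hu.mem q.1 q.2 hq.1) hk)) (hχ₀ q)
    exact this.trans_eq (by simp only [hE, entropyVec]; ring)
  have hkruzkov := hu.isKruzkovSolution.setIntegral_fderiv_nonneg k
    (hψ.contDiff.mul hχ) hc.mul_left fun q => mul_nonneg (hψ.nonneg q) (hχ₀ q)
  simp only [hfderiv, add_apply] at hkruzkov
  rw [integral_add hint_transport hint_damp] at hkruzkov
  simp only [smul_apply, smul_eq_mul] at hkruzkov hdamp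
  linarith

lemma setIntegral_mul_sum_abs_sub_le (hu : IsEntropySolutionOn L s f u₀ u)
    (hψ : IsDampedWeight L X ψ) {ι : Type*} (I : Finset ι) {χ : ι → ℝ × ℝ → ℝ}
    (hχ : ∀ i, ContDiff ℝ (⊤ : ℕ∞) (χ i)) (hc : ∀ i, HasCompactSupport (χ i))
    (hχ₀ : ∀ i z, 0 ≤ χ i z) {v : ι → ℝ} (hv : ∀ i, v i ∈ s) {A : ℝ}
    (hA : ∀ k ∈ s, ∀ q ∈ halfPlane, ψ q ≠ 0 →
      ∑ i ∈ I, fderiv ℝ (χ i) q (entropyVec f k (v i)) ≤ A) :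
    ∫ q in halfPlane, ψ q * ∑ i ∈ I, |u q.1 q.2 - v i| * χ i q ≤
      A * (∫ q in halfPlane, ψ q) +
        ∫ x, ψ (0, x) * ∑ i ∈ I, |u₀ x - v i| * χ i (0, x) := by
  have hint : ∀ i ∈ I, IntegrableOn (fun q => |u q.1 q.2 - v i| * (ψ q * χ i q)) halfPlane :=
    fun i _ => hu.integrableOn_abs_sub_mul measurable_const (fun _ => hv i)
      ((hψ.contDiff.continuous.mul (hχ i).continuous).integrable_of_hasCompactSupport
        (hc i).mul_left).integrableOn
  have hint_transport : ∀ i ∈ I, IntegrableOn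
      (fun q => ψ q * fderiv ℝ (χ i) q (entropyVec f (v i) (u q.1 q.2))) halfPlane := fun i _ =>
    hu.integrableOn_clm_entropyVec (hv i)
      (hψ.contDiff.continuous.smul ((hχ i).continuous_fderiv (by simp)))
      (((hc i).fderiv ℝ).smul_left (f := ψ))
  have hint_init : ∀ i ∈ I, Integrable fun x => |u₀ x - v i| * (ψ (0, x) * χ i (0, x)) :=
    fun i _ => hu.integrable_abs_init_sub_mul (hv i) (hψ.integrable_init_mul (hχ i).continuous)
  simp only [Finset.mul_sum, mul_left_comm (ψ _)]
  rw [integral_finsetSum _ hint, integral_finsetSum _ hint_init]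
  calc ∑ i ∈ I, ∫ q in halfPlane, |u q.1 q.2 - v i| * (ψ q * χ i q)
      ≤ ∑ i ∈ I, ((∫ q in halfPlane, ψ q * fderiv ℝ (χ i) q (entropyVec f (v i) (u q.1 q.2))) +
          ∫ x, |u₀ x - v i| * (ψ (0, x) * χ i (0, x))) := Finset.sum_le_sum fun i _ =>
        hu.setIntegral_abs_sub_mul_le (hv i) hψ (hχ i) (hc i) (hχ₀ i)
    _ ≤ _ := by
      rw [Finset.sum_add_distrib, ← integral_finsetSum _ hint_transport, ← integral_const_mul]
      refine add_le_add ?_ le_rfl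
      refine setIntegral_mono_on (integrable_finsetSum _ hint_transport)
        (hψ.integrableOn.const_mul A) measurableSet_halfPlane fun q hq => ?_
      rw [← Finset.mul_sum, mul_comm A]
      rcases eq_or_ne (ψ q) 0 with h | h
      · simp [h]
      · simp only [entropyVec_comm f (v _)]
        exact mul_le_mul_of_nonneg_left (hA _ (hu.mem q.1 q.2 hq.1) q hq h) (hψ.nonneg q)

end IsEntropySolutionOn

section CellKernel

variable {lam ε : ℝ} {z : ℝ × ℝ}

/-- A smooth kernel at time scale `lam * ε` and space scale `ε`, supported in `t > 0` so that it
only sees sites of the scheme strictly after a given point of the half-plane. -/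
noncomputable def cellKernel (lam ε : ℝ) (z : ℝ × ℝ) : ℝ :=
  (⟨1, 2, one_pos, one_lt_two⟩ : ContDiffBump ((2, 0) : ℝ × ℝ)) (z.1 / (lam * ε), z.2 / ε)

lemma contDiff_cellKernel (lam ε : ℝ) : ContDiff ℝ (⊤ : ℕ∞) (cellKernel lam ε) :=
  (ContDiffBump.contDiff _).comp
    ((contDiff_fst.div_const _).prodMk (contDiff_snd.div_const _))

lemma cellKernel_nonneg (lam ε : ℝ) (z : ℝ × ℝ) : 0 ≤ cellKernel lam ε z :=
  ContDiffBump.nonneg _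

lemma cellKernel_le_one (lam ε : ℝ) (z : ℝ × ℝ) : cellKernel lam ε z ≤ 1 :=
  ContDiffBump.le_one _

lemma cellKernel_eq_one (hlam : 0 < lam) (hε : 0 < ε) (ht : z.1 ∈ Icc (lam * ε) (3 * (lam * ε)))
    (hx : |z.2| ≤ ε) : cellKernel lam ε z = 1 := by
  have hlamε := mul_pos hlam hε
  refine ContDiffBump.one_of_mem_closedBall _ ?_
  rw [mem_closedBall_iff_norm, Prod.norm_def, max_le_iff]
  simp only [Prod.fst_sub, Prod.snd_sub, sub_zero, Real.norm_eq_abs]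
  constructor
  · rw [abs_le, neg_le_sub_iff_le_add, sub_le_iff_le_add, div_le_iff₀ hlamε,
      ← sub_le_iff_le_add, le_div_iff₀ hlamε]
    constructor <;> linarith [ht.1, ht.2]
  · rw [abs_div, abs_of_pos hε]
    exact (div_le_one hε).2 hx

lemma mem_Ioo_of_cellKernel_ne_zero (hlam : 0 < lam) (hε : 0 < ε) (h : cellKernel lam ε z ≠ 0) :
    z.1 ∈ Ioo 0 (4 * (lam * ε)) ∧ z.2 ∈ Ioo (-(2 * ε)) (2 * ε) := by
  have hlamε := mul_pos hlam hε
  have hball : (z.1 / (lam * ε), z.2 / ε) ∈ Metric.ball ((2, 0) : ℝ × ℝ) 2 := by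
    rw [← ContDiffBump.support_eq ⟨1, 2, one_pos, one_lt_two⟩]
    exact h
  rw [mem_ball_iff_norm, Prod.norm_def, max_lt_iff] at hball
  simp only [Prod.fst_sub, Prod.snd_sub, sub_zero, Real.norm_eq_abs, abs_lt] at hball
  obtain ⟨⟨h₁, h₂⟩, h₃, h₄⟩ := hball
  rw [neg_lt_sub_iff_lt_add, ← sub_lt_iff_lt_add', sub_self, lt_div_iff₀ hlamε, zero_mul] at h₁
  rw [sub_lt_iff_lt_add, div_lt_iff₀ hlamε] at h₂
  rw [lt_div_iff₀ hε] at h₃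
  rw [div_lt_iff₀ hε] at h₄
  exact ⟨⟨h₁, by linarith⟩, by linarith, by linarith⟩

lemma hasCompactSupport_cellKernel (hlam : 0 < lam) (hε : 0 < ε) :
    HasCompactSupport (cellKernel lam ε) :=
  HasCompactSupport.intro (isCompact_Icc.prod isCompact_Icc) fun _ hz => by
    by_contra h
    have := mem_Ioo_of_cellKernel_ne_zero hlam hε h
    exact hz ⟨Ioo_subset_Icc_self this.1, Ioo_subset_Icc_self this.2⟩

end CellKernel

section Cells

variable {lam δ X : ℝ} {P c : ℕ} {q : ℝ × ℝ} {i : ℕ × ℤ}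

/-- The index of the lattice site obtained by moving `o.1` time levels and `o.2` space cells away
from the cell containing the point `q`. -/
noncomputable def cellIndex (lam δ : ℝ) (q : ℝ × ℝ) (o : ℕ × ℤ) : ℕ × ℤ :=
  (⌊q.1 / (lam * δ)⌋₊ + o.1, ⌊q.2 / δ - ↑(⌊q.1 / (lam * δ)⌋₊ + o.1) / 2⌋ + o.2)

lemma measurable_cellIndex (lam δ : ℝ) (o : ℕ × ℤ) :
    Measurable fun q => cellIndex lam δ q o := by
  have hn : Measurable fun q : ℝ × ℝ => ⌊q.1 / (lam * δ)⌋₊ + o.1 :=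
    (Nat.measurable_floor.comp (measurable_fst.div_const _)).add_const _
  exact hn.prodMk ((Int.measurable_floor.comp ((measurable_snd.div_const _).sub
    ((measurable_from_top.comp hn).div_const _))).add_const _)

lemma injective_cellIndex (lam δ : ℝ) (q : ℝ × ℝ) : Function.Injective (cellIndex lam δ q) := by
  rintro ⟨a, b⟩ ⟨a', b'⟩ h
  simp only [cellIndex, Prod.mk.injEq, add_right_inj] at h
  obtain ⟨rfl, h⟩ := h
  simpa using h

lemma latticeSite_cellIndex_snd_sub_mem (lam : ℝ) (hδ : 0 < δ) (q : ℝ × ℝ) (o : ℕ × ℤ) :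
    (latticeSite lam δ (cellIndex lam δ q o)).2 - q.2 ∈ Ioc ((o.2 - 1) * δ) (o.2 * δ) := by
  set n : ℕ := ⌊q.1 / (lam * δ)⌋₊ + o.1 with hn
  have hcoord : (latticeSite lam δ (cellIndex lam δ q o)).2 - q.2 =
      (⌊q.2 / δ - n / 2⌋ + o.2 - (q.2 / δ - n / 2)) * δ := by
    simp only [latticeSite, cellIndex, ← hn]
    push_cast
    field_simp
    ring
  rw [hcoord, mem_Ioc, mul_lt_mul_iff_left₀ hδ, mul_le_mul_iff_left₀ hδ]
  constructor
  · linarith [Int.lt_floor_add_one (q.2 / δ - n / 2)]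
  · linarith [Int.floor_le (q.2 / δ - n / 2)]

lemma latticeSite_cellIndex_fst_sub_mem (hlam : 0 < lam) (hδ : 0 < δ) (hq : q ∈ halfPlane)
    (o : ℕ × ℤ) : (latticeSite lam δ (cellIndex lam δ q o)).1 - q.1 ∈
      Ioc ((o.1 - 1) * (lam * δ)) (o.1 * (lam * δ)) := by
  have hlamδ := mul_pos hlam hδ
  have hcoord : (latticeSite lam δ (cellIndex lam δ q o)).1 - q.1 =
      (⌊q.1 / (lam * δ)⌋₊ + o.1 - q.1 / (lam * δ)) * (lam * δ) := by
    simp only [latticeSite, cellIndex]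
    push_cast
    field_simp
  rw [hcoord, mem_Ioc, mul_lt_mul_iff_left₀ hlamδ, mul_le_mul_iff_left₀ hlamδ]
  constructor
  · linarith [Nat.lt_floor_add_one (q.1 / (lam * δ))]
  · linarith [Nat.floor_le (div_nonneg hq.1 hlamδ.le)]

/-- The offsets of the sites at which the kernel of scale `P * δ` equals `1`. -/
noncomputable def innerOffsets (P : ℕ) : Finset (ℕ × ℤ) :=
  Finset.Ioc P (3 * P) ×ˢ Finset.Ioc (-P : ℤ) P

/-- The offsets of the sites at which the kernel of scale `P * δ` may be nonzero. -/
noncomputable def outerOffsets (P : ℕ) : Finset (ℕ × ℤ) :=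
  Finset.Ioc 0 (4 * P) ×ˢ Finset.Ioc (-(2 * P) : ℤ) (2 * P)

lemma card_innerOffsets (P : ℕ) : (innerOffsets P).card = 4 * P ^ 2 := by
  rw [innerOffsets, Finset.card_product, Nat.card_Ioc, Int.card_Ioc]
  have : 3 * P - P = 2 * P := by omega
  have : ((P : ℤ) - -P).toNat = 2 * P := by omega
  simp only [*]
  ring

lemma card_outerOffsets (P : ℕ) : (outerOffsets P).card = 16 * P ^ 2 := by
  rw [outerOffsets, Finset.card_product, Nat.card_Ioc, Int.card_Ioc]
  have : ((2 * P : ℤ) - -(2 * P)).toNat = 4 * P := by omega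
  rw [this]
  simp only [Nat.sub_zero]
  ring

lemma abs_latticeSite_cellIndex_snd_sub_le (lam : ℝ) (hδ : 0 < δ) (q : ℝ × ℝ) {o : ℕ × ℤ}
    (ho : o ∈ innerOffsets P) :
    |(latticeSite lam δ (cellIndex lam δ q o)).2 - q.2| ≤ P * δ := by
  have hx := latticeSite_cellIndex_snd_sub_mem lam hδ q o
  obtain ⟨h₁, h₂⟩ := Finset.mem_Ioc.1 (Finset.mem_product.1 ho).2
  have h₁ : (-P : ℝ) ≤ o.2 - 1 := by exact_mod_cast Int.le_sub_one_of_lt h₁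
  have h₂ : (o.2 : ℝ) ≤ P := by exact_mod_cast h₂
  exact abs_le.2 ⟨by nlinarith [hx.1], by nlinarith [hx.2]⟩

lemma cellKernel_latticeSite_cellIndex_sub (hlam : 0 < lam) (hδ : 0 < δ) (hP : 0 < P)
    (hq : q ∈ halfPlane) {o : ℕ × ℤ} (ho : o ∈ innerOffsets P) :
    cellKernel lam (P * δ) (latticeSite lam δ (cellIndex lam δ q o) - q) = 1 := by
  have hlamδ := mul_pos hlam hδ
  have ht := latticeSite_cellIndex_fst_sub_mem hlam hδ hq o
  obtain ⟨h₁, h₂⟩ := Finset.mem_Ioc.1 (Finset.mem_product.1 ho).1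
  have h₁ : (P : ℝ) ≤ o.1 - 1 := le_sub_iff_add_le.2 (by exact_mod_cast h₁)
  have h₂ : (o.1 : ℝ) ≤ 3 * P := by exact_mod_cast h₂
  refine cellKernel_eq_one hlam (by positivity) ⟨?_, ?_⟩
    (abs_latticeSite_cellIndex_snd_sub_le lam hδ q ho)
  · rw [Prod.fst_sub]
    nlinarith [ht.1]
  · rw [Prod.fst_sub]
    nlinarith [ht.2]

lemma mem_Ioo_of_cellKernel_latticeSite_sub_ne_zero (hlam : 0 < lam) (hδ : 0 < δ) (hP : 0 < P)
    (h : cellKernel lam (P * δ) (latticeSite lam δ i - q) ≠ 0) :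
    (i.1 : ℝ) - q.1 / (lam * δ) ∈ Ioo 0 (4 * P : ℝ) ∧
      (i.2 + i.1 / 2 : ℝ) - q.2 / δ ∈ Ioo (-(2 * P) : ℝ) (2 * P) := by
  have hlamδ := mul_pos hlam hδ
  obtain ⟨⟨h₁, h₂⟩, h₃, h₄⟩ := mem_Ioo_of_cellKernel_ne_zero hlam (by positivity) h
  have hq₁ : q.1 / (lam * δ) * (lam * δ) = q.1 := div_mul_cancel₀ _ hlamδ.ne'
  have hq₂ : q.2 / δ * δ = q.2 := div_mul_cancel₀ _ hδ.ne'
  simp only [Prod.fst_sub, Prod.snd_sub, latticeSite] at h₁ h₂ h₃ h₄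
  refine ⟨⟨?_, ?_⟩, ?_, ?_⟩ <;> nlinarith

lemma mem_image_cellIndex_of_cellKernel_ne_zero (hlam : 0 < lam) (hδ : 0 < δ) (hP : 0 < P)
    (hq : q ∈ halfPlane) (h : cellKernel lam (P * δ) (latticeSite lam δ i - q) ≠ 0) :
    i ∈ (outerOffsets P).image (cellIndex lam δ q) := by
  obtain ⟨⟨h₁, h₂⟩, h₃, h₄⟩ := mem_Ioo_of_cellKernel_latticeSite_sub_ne_zero hlam hδ hP h
  set τ := q.1 / (lam * δ) with hτ
  have hτ₀ : 0 ≤ τ := div_nonneg hq.1 (mul_pos hlam hδ).le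
  have hn : ⌊τ⌋₊ < i.1 := (Nat.floor_lt hτ₀).2 (by linarith)
  have hn' : i.1 ≤ 4 * P + ⌊τ⌋₊ := by
    have := Nat.lt_floor_add_one τ
    have : (i.1 : ℝ) < 4 * P + ⌊τ⌋₊ + 1 := by linarith
    exact Nat.lt_succ_iff.1 (by exact_mod_cast this)
  set ξ := q.2 / δ - i.1 / 2 with hξ
  have hj : -(2 * P) < i.2 - ⌊ξ⌋ := by
    have := Int.floor_le ξ
    have : (-(2 * P) : ℝ) < i.2 - ⌊ξ⌋ := by linarith
    exact_mod_cast this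
  have hj' : i.2 - ⌊ξ⌋ ≤ 2 * P := by
    have := Int.lt_floor_add_one ξ
    have : (i.2 - ⌊ξ⌋ : ℝ) < 2 * P + 1 := by linarith
    exact Int.lt_add_one_iff.1 (by exact_mod_cast this)
  refine Finset.mem_image.2 ⟨(i.1 - ⌊τ⌋₊, i.2 - ⌊ξ⌋), Finset.mem_product.2
    ⟨Finset.mem_Ioc.2 ⟨by omega, by omega⟩, Finset.mem_Ioc.2 ⟨hj, hj'⟩⟩, ?_⟩
  simp only [cellIndex, ← hτ, Nat.add_sub_cancel' hn.le, ← hξ, add_sub_cancel]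

lemma mem_box_of_cellKernel_ne_zero (hlam : 0 < lam) (hδ : 0 < δ) (hP : 0 < P)
    (hq : q ∈ halfPlane) (hqX : ‖q‖ ≤ X) (hc : X / (lam * (P * δ)) + 4 ≤ c)
    (hc' : X / (P * δ) + 2 ≤ c)
    (h : cellKernel lam (P * δ) (latticeSite lam δ i - q) ≠ 0) :
    0 < i.1 ∧ i.1 < c * P ∧ |i.2| < 2 * (c * P) := by
  obtain ⟨⟨h₁, h₂⟩, h₃, h₄⟩ := mem_Ioo_of_cellKernel_latticeSite_sub_ne_zero hlam hδ hP h
  have hlamδ := mul_pos hlam hδ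
  have hP' : (0 : ℝ) < P := by exact_mod_cast hP
  have hτ₀ : 0 ≤ q.1 / (lam * δ) := div_nonneg hq.1 hlamδ.le
  have hτ : q.1 / (lam * δ) ≤ (c - 4) * P := by
    calc q.1 / (lam * δ) ≤ X / (lam * δ) := by
          gcongr
          exact (le_abs_self _).trans ((norm_fst_le q).trans hqX)
      _ = X / (lam * (P * δ)) * P := by field_simp
      _ ≤ _ := by gcongr; linarith
  have hξ : |q.2 / δ| ≤ (c - 2) * P := by
    calc |q.2 / δ| = |q.2| / δ := by rw [abs_div, abs_of_pos hδ]
      _ ≤ X / δ := by gcongr; exact (norm_snd_le q).trans hqX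
      _ = X / (P * δ) * P := by field_simp
      _ ≤ _ := by gcongr; linarith
  have hξ := abs_le.1 hξ
  have hn₀ : (0 : ℝ) < i.1 := by linarith
  have hn : (i.1 : ℝ) < c * P := by linarith
  have hj : |(i.2 : ℝ)| < 2 * (c * P) := abs_lt.2 ⟨by linarith, by linarith⟩
  exact ⟨by exact_mod_cast hn₀, by exact_mod_cast hn, by exact_mod_cast hj⟩

end Cells

section Sampling

variable {lam δ ω : ℝ} {P : ℕ} {L : ℝ≥0} {s : Set ℝ} {f u₀ : ℝ → ℝ}

/-- The Lax–Friedrichs approximation read off at the sites of offset `o`, as a function on the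
plane. -/
noncomputable def sampledScheme (f u₀ : ℝ → ℝ) (lam δ : ℝ) (o : ℕ × ℤ) (q : ℝ × ℝ) : ℝ :=
  laxFriedrichs f u₀ lam δ (cellIndex lam δ q o).1 (cellIndex lam δ q o).2

lemma measurable_sampledScheme (f u₀ : ℝ → ℝ) (lam δ : ℝ) (o : ℕ × ℤ) :
    Measurable (sampledScheme f u₀ lam δ o) :=
  (measurable_of_countable fun i : ℕ × ℤ => laxFriedrichs f u₀ lam δ i.1 i.2).comp
    (measurable_cellIndex lam δ o)

lemma exists_monotone_sampledScheme_eq [s.OrdConnected] (hf : LipschitzOnWith L f s)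
    (hlam : 0 < lam) (hcfl : 2 * lam * L ≤ 1) (hu₀ : ∀ x, u₀ x ∈ s) (hc : Continuous u₀)
    (hδ : 0 < δ) {o : ℕ × ℤ} (ho : o ∈ innerOffsets P) (t : ℝ) :
    ∃ Y : ℝ → ℝ, Monotone Y ∧ (∀ x, sampledScheme f u₀ lam δ o (t, x) = u₀ (Y x)) ∧
      ∀ x, |Y x - x| ≤ |t| / (2 * lam) + 5 / 2 * (P * δ) := by
  have := mul_pos hlam hδ
  set n := ⌊t / (lam * δ)⌋₊ + o.1 with hn
  obtain ⟨Y, hmono, hY, hclose⟩ := exists_monotone_laxFriedrichs_eq hf hlam.le hcfl hu₀ hc hδ.le n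
  refine ⟨fun x => Y (⌊x / δ - n / 2⌋ + o.2), fun x y hxy => hmono ?_, fun x => hY _, fun x => ?_⟩
  · gcongr
  have hspace := abs_latticeSite_cellIndex_snd_sub_le lam hδ (t, x) ho
  have htime : n * δ / 2 ≤ |t| / (2 * lam) + 3 / 2 * (P * δ) := by
    have ho₁ : (o.1 : ℝ) ≤ 3 * P := by
      exact_mod_cast (Finset.mem_Ioc.1 (Finset.mem_product.1 ho).1).2
    have hfloor : (⌊t / (lam * δ)⌋₊ : ℝ) ≤ |t| / (lam * δ) :=
      (Nat.cast_le.2 (Nat.floor_le_floor (by gcongr; exact le_abs_self t))).trans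
        (Nat.floor_le (by positivity))
    calc (n : ℝ) * δ / 2 ≤ (|t| / (lam * δ) + 3 * P) * δ / 2 := by
          rw [hn]
          push_cast
          gcongr
      _ = _ := by field_simp
  calc |Y (⌊x / δ - n / 2⌋ + o.2) - x|
      ≤ _ := abs_sub_le _ (latticeSite lam δ (cellIndex lam δ (t, x) o)).2 _
    _ ≤ n * δ / 2 + P * δ := add_le_add (hclose _) hspace
    _ ≤ _ := by linarith

lemma sum_cellKernel_le (hlam : 0 < lam) (hδ : 0 < δ) (hP : 0 < P) (I : Finset (ℕ × ℤ))
    {q : ℝ × ℝ} (hq : q ∈ halfPlane) :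
    ∑ i ∈ I, cellKernel lam (P * δ) (latticeSite lam δ i - q) ≤ 16 * P ^ 2 := by
  classical
  set κ := fun i => cellKernel lam (P * δ) (latticeSite lam δ i - q)
  have hcard : (I.filter fun i => κ i ≠ 0).card ≤ 16 * P ^ 2 := by
    rw [← card_outerOffsets]
    refine (Finset.card_le_card fun i hi => ?_).trans
      (Finset.card_image_le (f := cellIndex lam δ q))
    exact mem_image_cellIndex_of_cellKernel_ne_zero hlam hδ hP hq (Finset.mem_filter.1 hi).2
  calc ∑ i ∈ I, κ i = ∑ i ∈ I with κ i ≠ 0, κ i := (Finset.sum_filter_ne_zero I).symm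
    _ ≤ (I.filter fun i => κ i ≠ 0).card • (1 : ℝ) :=
        Finset.sum_le_card_nsmul _ _ _ fun i _ => cellKernel_le_one _ _ _
    _ ≤ 16 * P ^ 2 := by
        rw [nsmul_one]
        exact_mod_cast hcard

lemma sum_abs_init_sub_mul_le [s.OrdConnected] (hf : LipschitzOnWith L f s)
    (hlam : 0 < lam) (hcfl : 2 * lam * L ≤ 1) (hu₀ : ∀ x, u₀ x ∈ s) (hc : Continuous u₀)
    (hδ : 0 < δ) (hP : 0 < P) (I : Finset (ℕ × ℤ)) {x : ℝ}
    (hω : ∀ y, |y - x| < 4 * (P * δ) → |u₀ y - u₀ x| ≤ ω) :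
    ∑ i ∈ I, |u₀ x - laxFriedrichs f u₀ lam δ i.1 i.2| *
      cellKernel lam (P * δ) (latticeSite lam δ i - (0, x)) ≤ 16 * P ^ 2 * ω := by
  have hterm : ∀ i, |u₀ x - laxFriedrichs f u₀ lam δ i.1 i.2| *
      cellKernel lam (P * δ) (latticeSite lam δ i - (0, x)) ≤
      ω * cellKernel lam (P * δ) (latticeSite lam δ i - (0, x)) := by
    intro i
    rcases eq_or_ne (cellKernel lam (P * δ) (latticeSite lam δ i - (0, x))) 0 with h | h
    · simp [h]
    obtain ⟨Y, -, hY, hclose⟩ := exists_monotone_laxFriedrichs_eq hf hlam.le hcfl hu₀ hc hδ.le i.1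
    obtain ⟨⟨-, h₁⟩, h₂, h₃⟩ := mem_Ioo_of_cellKernel_ne_zero hlam
      (mul_pos (Nat.cast_pos.2 hP) hδ) h
    have hnear : |Y i.2 - x| < 4 * (P * δ) := by
      have hi : (i.1 : ℝ) * δ < 4 * (P * δ) := by
        simp only [latticeSite, Prod.fst_sub, sub_zero] at h₁
        nlinarith
      have := abs_le.1 (hclose i.2)
      simp only [latticeSite, Prod.snd_sub] at h₂ h₃
      exact abs_lt.2 ⟨by linarith, by linarith⟩
    rw [hY, abs_sub_comm]
    gcongr
    · exact cellKernel_nonneg _ _ _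
    · exact hω _ hnear
  have hω₀ : 0 ≤ ω := (abs_nonneg _).trans (hω x (by simpa using by positivity))
  calc _ ≤ ∑ i ∈ I, ω * cellKernel lam (P * δ) (latticeSite lam δ i - (0, x)) :=
        Finset.sum_le_sum fun i _ => hterm i
    _ = ω * ∑ i ∈ I, cellKernel lam (P * δ) (latticeSite lam δ i - (0, x)) :=
        (Finset.mul_sum _ _ _).symm
    _ ≤ ω * (16 * P ^ 2) := by
        gcongr
        exact sum_cellKernel_le hlam hδ hP I ⟨self_mem_Ici, mem_univ _⟩
    _ = _ := mul_comm _ _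

end Sampling

section Averaging

variable {lam δ X ω : ℝ} {P c : ℕ} {L C : ℝ≥0} {s : Set ℝ} {f u₀ : ℝ → ℝ} {u : ℝ → ℝ → ℝ}
  {ψ : ℝ × ℝ → ℝ}

lemma fderiv_comp_const_sub {E F : Type*} [NormedAddCommGroup E] [NormedSpace ℝ E]
    [NormedAddCommGroup F] [NormedSpace ℝ F] {κ : E → F} (hκ : Differentiable ℝ κ) (y q : E) :
    fderiv ℝ (fun q => κ (y - q)) q = -fderiv ℝ κ (y - q) := by
  have h := (hκ (y - q)).hasFDerivAt.comp q ((hasFDerivAt_id q).const_sub y)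
  rw [ContinuousLinearMap.comp_neg, ContinuousLinearMap.comp_id] at h
  exact h.fderiv

/-- The lattice indices whose kernels may meet the support of the weight. -/
noncomputable def siteBox (N : ℕ) : Finset (ℕ × ℤ) :=
  Finset.range N ×ˢ Finset.Icc (-(2 * (N : ℤ))) (2 * N)

lemma card_siteBox_le (N : ℕ) : (siteBox N).card ≤ 5 * N ^ 2 := by
  rw [siteBox, Finset.card_product, Finset.card_range, Int.card_Icc]
  have : (2 * (N : ℤ) + 1 - -(2 * N)).toNat = 4 * N + 1 := by omega
  rw [this]
  nlinarith [Nat.le_self_pow two_ne_zero N]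

lemma sum_abs_sub_sampledScheme_le (f u₀ : ℝ → ℝ) (v : ℝ) (hlam : 0 < lam) (hδ : 0 < δ)
    (hP : 0 < P) {q : ℝ × ℝ} (hq : q ∈ halfPlane) (hqX : ‖q‖ ≤ X)
    (hc₁ : X / (lam * (P * δ)) + 4 ≤ c) (hc₂ : X / (P * δ) + 2 ≤ c) :
    ∑ o ∈ innerOffsets P, |v - sampledScheme f u₀ lam δ o q| ≤
      ∑ i ∈ siteBox (c * P), |v - laxFriedrichs f u₀ lam δ i.1 i.2| *
        cellKernel lam (P * δ) (latticeSite lam δ i - q) := by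
  classical
  set φ : ℕ × ℤ → ℝ := fun i => |v - laxFriedrichs f u₀ lam δ i.1 i.2| *
    cellKernel lam (P * δ) (latticeSite lam δ i - q) with hφ
  have hone := fun o (ho : o ∈ innerOffsets P) =>
    cellKernel_latticeSite_cellIndex_sub hlam hδ hP hq ho
  have hsub : (innerOffsets P).image (cellIndex lam δ q) ⊆ siteBox (c * P) := by
    rintro _ hi
    obtain ⟨o, ho, rfl⟩ := Finset.mem_image.1 hi
    obtain ⟨-, h₁, h₂⟩ := mem_box_of_cellKernel_ne_zero hlam hδ hP hq hqX hc₁ hc₂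
      (i := cellIndex lam δ q o) (by simp [hone o ho])
    have := abs_lt.1 h₂
    simp only [siteBox, Finset.mem_product, Finset.mem_range, Finset.mem_Icc]
    push_cast
    omega
  calc ∑ o ∈ innerOffsets P, |v - sampledScheme f u₀ lam δ o q|
      = ∑ o ∈ innerOffsets P, φ (cellIndex lam δ q o) := Finset.sum_congr rfl fun o ho => by
        simp only [hφ, hone o ho, mul_one, sampledScheme]
    _ = ∑ i ∈ (innerOffsets P).image (cellIndex lam δ q), φ i :=
        (Finset.sum_image (injective_cellIndex lam δ q).injOn).symm
    _ ≤ ∑ i ∈ siteBox (c * P), φ i := Finset.sum_le_sum_of_subset_of_nonneg hsub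
        fun i _ _ => mul_nonneg (abs_nonneg _) (cellKernel_nonneg _ _ _)

lemma sum_fderiv_cellKernel_entropyVec_le [s.OrdConnected] (hs : Bornology.IsBounded s)
    (hf : LipschitzOnWith L f s) (hlam : 0 < lam) (hcfl : 2 * lam * L ≤ 1) (hu₀ : ∀ x, u₀ x ∈ s)
    (hδ : 0 < δ) (hP : 0 < P)
    (hC : ∀ z w, |cellKernel lam (P * δ) (z + w) - cellKernel lam (P * δ) z -
      fderiv ℝ (cellKernel lam (P * δ)) z w| ≤ C * ‖w‖ ^ 2)
    (hc₁ : X / (lam * (P * δ)) + 4 ≤ c) (hc₂ : X / (P * δ) + 2 ≤ c)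
    {k : ℝ} (hk : k ∈ s) {q : ℝ × ℝ} (hq : q ∈ halfPlane) (hqX : ‖q‖ ≤ X) :
    ∑ i ∈ siteBox (c * P), fderiv ℝ (fun q => cellKernel lam (P * δ) (latticeSite lam δ i - q)) q
        (entropyVec f k (laxFriedrichs f u₀ lam δ i.1 i.2)) ≤
      5 * (c * P) ^ 2 * (Metric.diam s * C * (lam + 1 / 2) ^ 2 * δ / lam) := by
  have : 0 ≤ Metric.diam s := Metric.diam_nonneg
  have hsum := sum_neg_fderiv_entropyVec_le (N := c * P) (J := 2 * (c * P : ℕ)) hs hf hlam hcfl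
    hu₀ hδ (cellKernel_nonneg lam (P * δ)) hC hk (q := q) fun i h => by
      exact_mod_cast mem_box_of_cellKernel_ne_zero hlam hδ hP hq hqX hc₁ hc₂ h
  simp only [fderiv_comp_const_sub ((contDiff_cellKernel lam (P * δ)).differentiable (by simp)),
    neg_apply]
  refine hsum.trans ?_
  gcongr
  exact_mod_cast card_siteBox_le (c * P)

lemma IsDampedWeight.integral_mul_sum_abs_init_sub_mul_le [s.OrdConnected]
    (hψ : IsDampedWeight L X ψ) (hf : LipschitzOnWith L f s) (hlam : 0 < lam)
    (hcfl : 2 * lam * L ≤ 1) (hu₀ : ∀ x, u₀ x ∈ s) (hc : Continuous u₀) (hδ : 0 < δ) (hP : 0 < P)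
    (hω : ∀ x y, |x| ≤ X → |y - x| < 4 * (P * δ) → |u₀ y - u₀ x| ≤ ω) (I : Finset (ℕ × ℤ)) :
    ∫ x, ψ (0, x) * ∑ i ∈ I, |u₀ x - laxFriedrichs f u₀ lam δ i.1 i.2| *
        cellKernel lam (P * δ) (latticeSite lam δ i - (0, x)) ≤
      16 * P ^ 2 * ω * ∫ x, ψ (0, x) := by
  have hinit : Integrable fun x => ψ (0, x) := by
    simpa using hψ.integrable_init_mul (χ := fun _ => 1) continuous_const
  rw [← integral_const_mul]
  refine integral_mono_of_nonneg (.of_forall fun x => mul_nonneg (hψ.nonneg _)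
    (Finset.sum_nonneg fun _ _ => mul_nonneg (abs_nonneg _) (cellKernel_nonneg _ _ _)))
    (hinit.const_mul _) (.of_forall fun x => ?_)
  rcases eq_or_ne (ψ (0, x)) 0 with h | h
  · simp [h]
  · have hx : |x| ≤ X :=
      (norm_snd_le (0, x)).trans (hψ.norm_le (0, x) ⟨self_mem_Ici, mem_univ _⟩ h)
    refine le_of_le_of_eq ?_ (mul_comm _ _)
    exact mul_le_mul_of_nonneg_left (sum_abs_init_sub_mul_le hf hlam hcfl hu₀ hc hδ hP _
      fun y => hω x y hx) (hψ.nonneg _)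

lemma IsEntropySolutionOn.setIntegral_mul_sum_sampledScheme_le [s.OrdConnected]
    (hu : IsEntropySolutionOn L s f u₀ u) (hψ : IsDampedWeight L X ψ)
    (hlam : 0 < lam) (hcfl : 2 * lam * L ≤ 1) (hcont : Continuous u₀) (hδ : 0 < δ) (hP : 0 < P)
    (hC : ∀ z w, |cellKernel lam (P * δ) (z + w) - cellKernel lam (P * δ) z -
      fderiv ℝ (cellKernel lam (P * δ)) z w| ≤ C * ‖w‖ ^ 2)
    (hc₁ : X / (lam * (P * δ)) + 4 ≤ c) (hc₂ : X / (P * δ) + 2 ≤ c)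
    (hω : ∀ x y, |x| ≤ X → |y - x| < 4 * (P * δ) → |u₀ y - u₀ x| ≤ ω) :
    ∫ q in halfPlane, ψ q * ∑ o ∈ innerOffsets P, |u q.1 q.2 - sampledScheme f u₀ lam δ o q| ≤
      5 * (c * P) ^ 2 * (Metric.diam s * C * (lam + 1 / 2) ^ 2 * δ / lam) *
        (∫ q in halfPlane, ψ q) + 16 * P ^ 2 * ω * ∫ x, ψ (0, x) := by
  have hε : 0 < P * δ := mul_pos (Nat.cast_pos.2 hP) hδ
  set v : ℕ × ℤ → ℝ := fun i => laxFriedrichs f u₀ lam δ i.1 i.2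
  have hv : ∀ i, v i ∈ s := fun i =>
    laxFriedrichs_mem hu.lipschitzOnWith hlam.le hcfl hu.init_mem i.1 i.2
  set χ : ℕ × ℤ → ℝ × ℝ → ℝ := fun i q => cellKernel lam (P * δ) (latticeSite lam δ i - q)
  have hχ : ∀ i, ContDiff ℝ (⊤ : ℕ∞) (χ i) := fun i =>
    (contDiff_cellKernel lam (P * δ)).comp (contDiff_const.sub contDiff_id)
  have hχc : ∀ i, HasCompactSupport (χ i) := fun i =>
    (hasCompactSupport_cellKernel hlam hε).comp_homeomorph (Homeomorph.subLeft _)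
  have hint : IntegrableOn
      (fun q => ψ q * ∑ i ∈ siteBox (c * P), |u q.1 q.2 - v i| * χ i q) halfPlane := by
    simp only [Finset.mul_sum, mul_left_comm (ψ _)]
    exact integrable_finsetSum _ fun i _ =>
      hu.integrableOn_abs_sub_mul measurable_const (fun _ => hv i)
        ((hψ.contDiff.continuous.mul (hχ i).continuous).integrable_of_hasCompactSupport
          (hχc i).mul_left).integrableOn
  calc ∫ q in halfPlane, ψ q * ∑ o ∈ innerOffsets P, |u q.1 q.2 - sampledScheme f u₀ lam δ o q|
      ≤ ∫ q in halfPlane, ψ q * ∑ i ∈ siteBox (c * P), |u q.1 q.2 - v i| * χ i q := by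
        refine integral_mono_of_nonneg (.of_forall fun q => mul_nonneg (hψ.nonneg q)
          (Finset.sum_nonneg fun _ _ => abs_nonneg _)) hint
          (ae_restrict_of_forall_mem measurableSet_halfPlane fun q hq => ?_)
        rcases eq_or_ne (ψ q) 0 with h | h
        · simp [h]
        · exact mul_le_mul_of_nonneg_left (sum_abs_sub_sampledScheme_le f u₀ _ hlam hδ hP hq
            (hψ.norm_le q hq h) hc₁ hc₂) (hψ.nonneg q)
    _ ≤ _ := hu.setIntegral_mul_sum_abs_sub_le hψ _ hχ hχc (fun i z => cellKernel_nonneg _ _ _) hv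
        fun k hk q hq h => sum_fderiv_cellKernel_entropyVec_le hu.isBounded hu.lipschitzOnWith hlam
          hcfl hu.init_mem hδ hP hC hc₁ hc₂ hk hq (hψ.norm_le q hq h)
    _ ≤ _ := add_le_add le_rfl (hψ.integral_mul_sum_abs_init_sub_mul_le hu.lipschitzOnWith hlam hcfl
        hu.init_mem hcont hδ hP hω _)

end Averaging

lemma IsEntropySolutionOn.exists_offset_setIntegral_mul_abs_sub_le {lam δ X ω : ℝ} {P c : ℕ}
    {L C : ℝ≥0} {s : Set ℝ} [s.OrdConnected] {f u₀ : ℝ → ℝ} {u : ℝ → ℝ → ℝ} {ψ : ℝ × ℝ → ℝ}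
    (hu : IsEntropySolutionOn L s f u₀ u) (hψ : IsDampedWeight L X ψ)
    (hlam : 0 < lam) (hcfl : 2 * lam * L ≤ 1) (hcont : Continuous u₀) (hδ : 0 < δ) (hP : 0 < P)
    (hC : ∀ z w, |cellKernel lam (P * δ) (z + w) - cellKernel lam (P * δ) z -
      fderiv ℝ (cellKernel lam (P * δ)) z w| ≤ C * ‖w‖ ^ 2)
    (hc₁ : X / (lam * (P * δ)) + 4 ≤ c) (hc₂ : X / (P * δ) + 2 ≤ c)
    (hω : ∀ x y, |x| ≤ X → |y - x| < 4 * (P * δ) → |u₀ y - u₀ x| ≤ ω) :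
    ∃ o ∈ innerOffsets P,
      ∫ q in halfPlane, |u q.1 q.2 - sampledScheme f u₀ lam δ o q| * ψ q ≤
        5 / 4 * c ^ 2 * (Metric.diam s * C * (lam + 1 / 2) ^ 2 * δ / lam) *
          (∫ q in halfPlane, ψ q) + 4 * ω * ∫ x, ψ (0, x) := by
  have : (0 : ℝ) < P := Nat.cast_pos.2 hP
  have hne : (innerOffsets P).Nonempty := by
    rw [← Finset.card_pos, card_innerOffsets]
    positivity
  refine Finset.exists_le_of_sum_le hne ?_
  rw [← integral_finsetSum _ fun o _ => hu.integrableOn_abs_sub_mul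
    (measurable_sampledScheme f u₀ lam δ o)
    (fun _ => laxFriedrichs_mem hu.lipschitzOnWith hlam.le hcfl hu.init_mem _ _) hψ.integrableOn]
  simp only [mul_comm _ (ψ _), ← Finset.mul_sum]
  refine (hu.setIntegral_mul_sum_sampledScheme_le hψ hlam hcfl hcont hδ hP hC hc₁ hc₂
    hω).trans_eq ?_
  rw [Finset.sum_const, card_innerOffsets, nsmul_eq_mul]
  push_cast
  ring

section ConeWeight

/-- The weight `exp (R - t)`, smoothly cut off to the cone `|x| < a - L t`. -/
noncomputable def coneWeight (L R a : ℝ) (q : ℝ × ℝ) : ℝ :=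
  Real.exp (R - q.1) * (Real.smoothTransition (a - L * q.1 - q.2) *
    Real.smoothTransition (a - L * q.1 + q.2))

variable {L R a : ℝ} {q : ℝ × ℝ}

lemma contDiff_coneWeight (L R a : ℝ) : ContDiff ℝ (⊤ : ℕ∞) (coneWeight L R a) := by
  have : ContDiff ℝ (⊤ : ℕ∞) Real.smoothTransition := Real.smoothTransition.contDiff
  unfold coneWeight
  fun_prop

lemma coneWeight_nonneg (L R a : ℝ) (q : ℝ × ℝ) : 0 ≤ coneWeight L R a q :=
  mul_nonneg (Real.exp_nonneg _)
    (mul_nonneg (Real.smoothTransition.nonneg _) (Real.smoothTransition.nonneg _))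

lemma abs_lt_of_coneWeight_ne_zero (h : coneWeight L R a q ≠ 0) : |q.2| < a - L * q.1 := by
  have hpos : ∀ {y}, Real.smoothTransition y ≠ 0 → 0 < y := fun h =>
    not_le.1 (mt Real.smoothTransition.zero_of_nonpos h)
  have h₁ := hpos (left_ne_zero_of_mul (right_ne_zero_of_mul h))
  have h₂ := hpos (right_ne_zero_of_mul (right_ne_zero_of_mul h))
  exact abs_lt.2 ⟨by linarith, by linarith⟩

lemma one_le_coneWeight (ht : q.1 ≤ R) (hx : |q.2| ≤ a - L * q.1 - 1) :
    1 ≤ coneWeight L R a q := by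
  have hx' := abs_le.1 hx
  rw [coneWeight, Real.smoothTransition.one_of_one_le (by linarith),
    Real.smoothTransition.one_of_one_le (by linarith), mul_one, mul_one]
  exact Real.one_le_exp (sub_nonneg.2 ht)

lemma fderiv_coneWeight_apply (L R a : ℝ) (q w : ℝ × ℝ) :
    fderiv ℝ (coneWeight L R a) q w = -w.1 * coneWeight L R a q - Real.exp (R - q.1) *
      (deriv Real.smoothTransition (a - L * q.1 - q.2) * (L * w.1 + w.2) *
          Real.smoothTransition (a - L * q.1 + q.2) +
        Real.smoothTransition (a - L * q.1 - q.2) *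
          (deriv Real.smoothTransition (a - L * q.1 + q.2) * (L * w.1 - w.2))) := by
  have hg : ∀ y, HasDerivAt Real.smoothTransition (deriv Real.smoothTransition y) y := fun y =>
    (Real.smoothTransition.contDiff.differentiable one_ne_zero y).hasDerivAt
  have hcone := (hasFDerivAt_fst (𝕜 := ℝ) (p := q)).const_mul L |>.const_sub a
  have hderiv := ((hasFDerivAt_fst (𝕜 := ℝ) (p := q)).const_sub R).exp.mul
    (((hg _).comp_hasFDerivAt q (hcone.sub hasFDerivAt_snd)).mul
      ((hg _).comp_hasFDerivAt q (hcone.add hasFDerivAt_snd)))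
  rw [show fderiv ℝ (coneWeight L R a) q = _ from hderiv.fderiv]
  simp only [Function.comp_apply, Pi.sub_apply, Pi.add_apply, Pi.mul_apply, add_apply, neg_apply,
    sub_apply, smul_apply, smul_add, smul_neg, smul_eq_mul, ContinuousLinearMap.coe_fst',
    ContinuousLinearMap.coe_snd', coneWeight, neg_mul]
  ring

lemma isDampedWeight_coneWeight {L : ℝ≥0} (hL : 0 < L) (R a : ℝ) :
    IsDampedWeight L (max a (a / L)) (coneWeight L R a) where
  contDiff := contDiff_coneWeight L R a
  nonneg := coneWeight_nonneg L R a
  norm_le q hq h := by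
    have hcone := abs_lt_of_coneWeight_ne_zero h
    have ht : 0 ≤ q.1 := hq.1
    have hLt : 0 ≤ L * q.1 := by positivity
    refine max_le (le_max_of_le_right ?_) (le_max_of_le_left ?_)
    · rw [Real.norm_of_nonneg ht, le_div_iff₀ (NNReal.coe_pos.2 hL)]
      linarith [abs_nonneg q.2]
    · exact hcone.le.trans (sub_le_self a hLt)
  fderiv_le q w hw := by
    have hg' : ∀ y, 0 ≤ deriv Real.smoothTransition y := fun y =>
      Real.smoothTransition.monotone.deriv_nonneg
    have hw' := abs_le.1 hw
    rw [fderiv_coneWeight_apply]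
    refine sub_le_self _ (mul_nonneg (Real.exp_nonneg _) (add_nonneg ?_ ?_))
    · exact mul_nonneg (mul_nonneg (hg' _) (by linarith)) (Real.smoothTransition.nonneg _)
    · exact mul_nonneg (Real.smoothTransition.nonneg _) (mul_nonneg (hg' _) (by linarith))

lemma exists_isDampedWeight {L : ℝ≥0} (hL : 0 < L) (R : ℝ) :
    ∃ X ψ, IsDampedWeight L X ψ ∧ ∀ q ∈ Icc 0 R ×ˢ Icc (-R) R, 1 ≤ ψ q := by
  refine ⟨_, _, isDampedWeight_coneWeight hL R (L * R + R + 1), fun q ⟨⟨_, ht⟩, hx⟩ =>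
    one_le_coneWeight ht ?_⟩
  have hLt : L * q.1 ≤ L * R := by gcongr
  linarith [abs_le.2 hx]

end ConeWeight

section Approximation

variable {L : ℝ≥0} {s : Set ℝ} {f u₀ : ℝ → ℝ} {u : ℝ → ℝ → ℝ}

lemma exists_pos_forall_dist_lt {α β : Type*} [PseudoMetricSpace α] [PseudoMetricSpace β]
    {K : Set α} (hK : IsCompact K) {g : α → β} (hg : ∀ x ∈ K, ContinuousAt g x) {ω : ℝ}
    (hω : 0 < ω) : ∃ r > 0, ∀ x ∈ K, ∀ y, dist x y < r → dist (g x) (g y) < ω := by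
  obtain ⟨r, hr, h⟩ := Metric.mem_uniformity_dist.1
    (hK.uniformContinuousAt_of_continuousAt g hg (Metric.dist_mem_uniformity hω))
  exact ⟨r, hr, fun x hx y hxy => h hxy hx⟩

namespace IsEntropySolutionOn

lemma setIntegral_abs_sub_le_of_one_le {X : ℝ} {ψ w : ℝ × ℝ → ℝ}
    (hu : IsEntropySolutionOn L s f u₀ u) (hψ : IsDampedWeight L X ψ) (hw : Measurable w)
    (hws : ∀ q, w q ∈ s) {S : Set (ℝ × ℝ)} (hS : MeasurableSet S) (hSH : S ⊆ halfPlane)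
    (hone : ∀ q ∈ S, 1 ≤ ψ q) :
    ∫ q in S, |u q.1 q.2 - w q| ≤ ∫ q in halfPlane, |u q.1 q.2 - w q| * ψ q := by
  have hint := hu.integrableOn_abs_sub_mul hw hws hψ.integrableOn
  calc ∫ q in S, |u q.1 q.2 - w q|
      ≤ ∫ q in S, |u q.1 q.2 - w q| * ψ q :=
        integral_mono_of_nonneg (.of_forall fun _ => abs_nonneg _) (hint.mono_set hSH)
          (ae_restrict_of_forall_mem hS fun q hq =>
            le_mul_of_one_le_right (abs_nonneg _) (hone q hq))
    _ ≤ _ := setIntegral_mono_set hint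
        (.of_forall fun q => mul_nonneg (abs_nonneg _) (hψ.nonneg q)) hSH.eventuallyLE

lemma exists_setIntegral_abs_sub_sampledScheme_mul_le [s.OrdConnected]
    (hu : IsEntropySolutionOn L s f u₀ u) {X : ℝ} {ψ : ℝ × ℝ → ℝ} (hψ : IsDampedWeight L X ψ)
    {lam : ℝ} (hlam : 0 < lam) (hcfl : 2 * lam * L ≤ 1) (hcont : Continuous u₀) {η : ℝ}
    (hη : 0 < η) :
    ∃ δ : ℝ, 0 < δ ∧ ∃ P : ℕ, P * δ ≤ 1 ∧ ∃ o ∈ innerOffsets P,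
      ∫ q in halfPlane, |u q.1 q.2 - sampledScheme f u₀ lam δ o q| * ψ q ≤ η := by
  set V := ∫ q in halfPlane, ψ q
  set W := ∫ x, ψ (0, x)
  have hV : 0 ≤ V := integral_nonneg hψ.nonneg
  have hW : 0 ≤ W := integral_nonneg fun x => hψ.nonneg _
  obtain ⟨r, hr, hω⟩ := exists_pos_forall_dist_lt (isCompact_Icc (a := -X) (b := X))
    (fun x _ => hcont.continuousAt) (show 0 < η / (8 * (W + 1)) by positivity)
  obtain ⟨ε, hε, hε₁, hεr⟩ : ∃ ε > 0, ε ≤ 1 ∧ 4 * ε ≤ r :=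
    ⟨min 1 (r / 4), by positivity, min_le_left _ _, by linarith [min_le_right 1 (r / 4)]⟩
  obtain ⟨C, hC⟩ := exists_abs_sub_sub_fderiv_le (contDiff_infty.1 (contDiff_cellKernel lam ε) 2)
    (hasCompactSupport_cellKernel hlam hε)
  obtain ⟨c, hc⟩ := exists_nat_ge (max (X / (lam * ε) + 4) (X / ε + 2))
  obtain ⟨hc₁, hc₂⟩ := max_le_iff.1 hc
  set A := 5 / 4 * c ^ 2 * (Metric.diam s * C * (lam + 1 / 2) ^ 2 / lam) * V
  have : 0 ≤ A := mul_nonneg (by have := Metric.diam_nonneg (s := s); positivity) hV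
  obtain ⟨P, hP⟩ := exists_nat_gt (2 * A * ε / η)
  have hP₀ : (0 : ℝ) < P := lt_of_le_of_lt (by positivity) hP
  obtain ⟨δ, hδ⟩ : ∃ δ, P * δ = ε := ⟨ε / P, mul_div_cancel₀ _ hP₀.ne'⟩
  have hδ₀ : 0 < δ := pos_of_mul_pos_right (hδ ▸ hε) hP₀.le
  subst hδ
  obtain ⟨o, ho, hbound⟩ := hu.exists_offset_setIntegral_mul_abs_sub_le hψ hlam hcfl hcont hδ₀
    (Nat.cast_pos.1 hP₀) hC hc₁ hc₂ fun x y hx hxy => by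
      rw [abs_sub_comm] at hxy ⊢
      exact (hω x (abs_le.1 hx) y (hxy.trans_le hεr)).le
  refine ⟨δ, hδ₀, P, hε₁, o, ho, hbound.trans ?_⟩
  have hscheme : A * δ ≤ η / 2 := by
    rw [div_lt_iff₀ hη] at hP
    nlinarith
  have hinit : 4 * (η / (8 * (W + 1))) * W ≤ η / 2 := by
    rw [mul_div_assoc', div_mul_eq_mul_div, div_le_iff₀ (by positivity)]
    nlinarith
  calc _ = A * δ + 4 * (η / (8 * (W + 1))) * W := by ring
    _ ≤ η := by linarith

lemma exists_monotone_setIntegral_abs_sub_le [s.OrdConnected]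
    (hu : IsEntropySolutionOn L s f u₀ u) (hL : 0 < L) (hcont : Continuous u₀) (R : ℝ) {η : ℝ}
    (hη : 0 < η) :
    ∃ Y : ℝ → ℝ → ℝ, (∀ t, Monotone (Y t)) ∧ (∀ t x, |Y t x - x| ≤ L * |t| + 3) ∧
      Measurable (fun q : ℝ × ℝ => u₀ (Y q.1 q.2)) ∧
      ∫ q in Icc 0 R ×ˢ Icc (-R) R, |u q.1 q.2 - u₀ (Y q.1 q.2)| ≤ η := by
  have : (0 : ℝ) < L := hL
  set lam : ℝ := 1 / (2 * L) with hlam_def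
  have hlam : 0 < lam := by positivity
  have hcfl : 2 * lam * L ≤ 1 := le_of_eq (by rw [hlam_def]; field_simp)
  obtain ⟨X, ψ, hψ, hone⟩ := exists_isDampedWeight hL R
  obtain ⟨δ, hδ, P, hPδ, o, ho, hη'⟩ :=
    hu.exists_setIntegral_abs_sub_sampledScheme_mul_le hψ hlam hcfl hcont hη
  choose Y hmono hY hclose using exists_monotone_sampledScheme_eq hu.lipschitzOnWith hlam hcfl
    hu.init_mem hcont hδ ho
  have hY' : (fun q : ℝ × ℝ => u₀ (Y q.1 q.2)) = sampledScheme f u₀ lam δ o :=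
    funext fun q => (hY q.1 q.2).symm
  have hmeas : Measurable fun q : ℝ × ℝ => u₀ (Y q.1 q.2) :=
    hY' ▸ measurable_sampledScheme f u₀ lam δ o
  refine ⟨Y, hmono, fun t x => (hclose t x).trans ?_, hmeas, ?_⟩
  · have : |t| / (2 * lam) = L * |t| := by rw [hlam_def]; field_simp
    linarith
  · rw [← hY'] at hη'
    exact (hu.setIntegral_abs_sub_le_of_one_le hψ hmeas (fun _ => hu.init_mem _)
      (measurableSet_Icc.prod measurableSet_Icc) (prod_mono Icc_subset_Ici_self (subset_univ _))
      hone).trans hη'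

end IsEntropySolutionOn

end Approximation

lemma ae_tendsto_of_tsum_setLIntegral_edist_ne_top {α β : Type*} [MeasurableSpace α]
    {μ : Measure α} [PseudoEMetricSpace β] {w : ℕ → α → β} {v : α → β} {K : ℕ → Set α}
    (hK : ∀ n, MeasurableSet (K n)) (hwv : ∀ n, AEMeasurable (fun x => edist (w n x) (v x)) μ)
    (hsum : ∑' n, ∫⁻ x in K n, edist (w n x) (v x) ∂μ ≠ ⊤) :
    ∀ᵐ x ∂μ, (∀ᶠ n in atTop, x ∈ K n) → Tendsto (fun n => w n x) atTop (𝓝 (v x)) := by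
  set F : ℕ → α → ℝ≥0∞ := fun n => (K n).indicator fun x => edist (w n x) (v x)
  have hF : ∀ n, AEMeasurable (F n) μ := fun n => (hwv n).indicator (hK n)
  have hfinite : ∫⁻ x, ∑' n, F n x ∂μ ≠ ⊤ := by
    rw [lintegral_tsum hF]
    simpa only [F, lintegral_indicator (hK _)] using hsum
  filter_upwards [ae_lt_top' (.tsum hF) hfinite] with x hx hmem
  rw [tendsto_iff_edist_tendsto_0]
  exact (ENNReal.tendsto_atTop_zero_of_tsum_ne_top hx.ne).congr'
    (hmem.mono fun n hn => indicator_of_mem hn _)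

lemma exists_monotone_tendsto_of_ultrafilter {ι α β : Type*} [Preorder α] [Preorder β]
    [TopologicalSpace β] [OrderClosedTopology β] (𝒰 : Ultrafilter ι) {Y : ι → α → β}
    (hmono : ∀ i, Monotone (Y i)) (hcompact : ∀ x, ∃ K, IsCompact K ∧ ∀ i, Y i x ∈ K) :
    ∃ y : α → β, Monotone y ∧ ∀ x, Tendsto (fun i => Y i x) 𝒰 (𝓝 (y x)) := by
  have hlim : ∀ x, ∃ y, Tendsto (fun i => Y i x) 𝒰 (𝓝 y) := fun x => by
    obtain ⟨K, hK, hY⟩ := hcompact x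
    obtain ⟨y, -, hy⟩ := hK.ultrafilter_le_nhds (𝒰.map fun i => Y i x)
      (tendsto_principal.2 (.of_forall hY))
    exact ⟨y, hy⟩
  choose y hy using hlim
  exact ⟨y, fun x x' hx => le_of_tendsto_of_tendsto' (hy x) (hy x') fun i => hmono i hx, hy⟩

/-- The regions `[0, n] × [-n, n]` exhausting the half-plane. -/
abbrev exhaustingBox (n : ℕ) : Set (ℝ × ℝ) := Icc 0 (n : ℝ) ×ˢ Icc (-(n : ℝ)) n

lemma eventually_mem_exhaustingBox {q : ℝ × ℝ} (hq : 0 ≤ q.1) :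
    ∀ᶠ n in atTop, q ∈ exhaustingBox n := by
  filter_upwards [eventually_ge_atTop ⌈max q.1 |q.2|⌉₊] with n hn
  obtain ⟨ht, hx⟩ := max_le_iff.1 (Nat.ceil_le.1 hn)
  exact ⟨⟨hq, ht⟩, abs_le.1 hx⟩

namespace IsEntropySolutionOn

variable {L : ℝ≥0} {s : Set ℝ} {f u₀ : ℝ → ℝ} {u : ℝ → ℝ → ℝ}

lemma setLIntegral_edist_exhaustingBox (hu : IsEntropySolutionOn L s f u₀ u) {w : ℝ × ℝ → ℝ}
    (hw : Measurable w) (hws : ∀ q, w q ∈ s) (n : ℕ) :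
    ∫⁻ q in exhaustingBox n, edist (w q) (u q.1 q.2) =
      ENNReal.ofReal (∫ q in exhaustingBox n, |u q.1 q.2 - w q|) := by
  have hint : IntegrableOn (fun q => |u q.1 q.2 - w q|) (exhaustingBox n) := by
    refine Measure.integrableOn_of_bounded (M := Metric.diam s)
      (isCompact_Icc.prod isCompact_Icc).measure_lt_top.ne
      (hu.measurable_apply.sub hw).abs.aestronglyMeasurable
      (ae_restrict_of_forall_mem (measurableSet_Icc.prod measurableSet_Icc) fun q hq => ?_)
    rw [Real.norm_eq_abs, abs_abs]
    exact Metric.dist_le_diam_of_mem hu.isBounded (hu.mem q.1 q.2 hq.1.1) (hws q)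
  rw [ofReal_integral_eq_lintegral_ofReal hint (.of_forall fun _ => abs_nonneg _)]
  simp only [edist_comm (w _), edist_dist, Real.dist_eq]

theorem exists_monotone_ae_eq [s.OrdConnected] (hu : IsEntropySolutionOn L s f u₀ u) (hL : 0 < L)
    (hcont : Continuous u₀) :
    ∃ α : ℝ → ℝ → ℝ, (∀ t, Monotone (α t)) ∧
      ∀ᵐ q : ℝ × ℝ, 0 ≤ q.1 → u q.1 q.2 = u₀ (α q.1 q.2) := by
  choose Y hmono hclose hmeas hη using fun n : ℕ =>
    hu.exists_monotone_setIntegral_abs_sub_le hL hcont n (pow_pos (one_half_pos (α := ℝ)) n)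
  have hsum : ∑' n, ∫⁻ q in exhaustingBox n, edist (u₀ (Y n q.1 q.2)) (u q.1 q.2) ≠ ⊤ := by
    simp only [hu.setLIntegral_edist_exhaustingBox (hmeas _) fun _ => hu.init_mem _]
    refine ne_top_of_le_ne_top ?_ (ENNReal.tsum_le_tsum fun n => ENNReal.ofReal_le_ofReal (hη n))
    exact summable_geometric_two.tsum_ofReal_ne_top
  have hae := ae_tendsto_of_tsum_setLIntegral_edist_ne_top (μ := volume)
    (fun n => measurableSet_Icc.prod measurableSet_Icc)
    (fun n => ((hmeas n).edist hu.measurable_apply).aemeasurable) hsum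
  choose α hα hlim using fun t => exists_monotone_tendsto_of_ultrafilter (hyperfilter ℕ)
    (fun n => hmono n t) fun x => ⟨_, isCompact_closedBall x (L * |t| + 3), fun n => hclose n t x⟩
  refine ⟨α, hα, hae.mono fun q hq ht => ?_⟩
  exact tendsto_nhds_unique
    ((hq (eventually_mem_exhaustingBox ht)).mono_left Nat.hyperfilter_le_atTop)
    ((hcont.tendsto _).comp (hlim q.1 q.2))

end IsEntropySolutionOn

lemma intervalIntegrable_of_boundedVariationOn {g : ℝ → ℝ} {a b : ℝ}
    (hg : BoundedVariationOn g (uIcc a b)) : IntervalIntegrable g volume a b := by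
  obtain ⟨p, q, hp, hq, rfl⟩ := hg.locallyBoundedVariationOn.exists_monotoneOn_sub_monotoneOn
  exact hp.intervalIntegrable.sub hq.intervalIntegrable

lemma intervalIntegrable_of_memLp {E : Type*} [NormedAddCommGroup E] {g : ℝ → E} {μ : Measure ℝ}
    [IsLocallyFiniteMeasure μ] {p : ℝ≥0∞} (hp : 1 ≤ p) (hg : MemLp g p μ) (a b : ℝ) :
    IntervalIntegrable g μ a b :=
  ((hg.locallyIntegrable hp).integrableOn_isCompact isCompact_uIcc).intervalIntegrable

lemma holderWith_of_sub_eq_intervalIntegral {E : Type*} [NormedAddCommGroup E] [NormedSpace ℝ E]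
    {v g : ℝ → E} {p : ℝ≥0∞} (hp : 1 ≤ p) (hg : MemLp g p)
    (hv : ∀ a b, v b - v a = ∫ y in a..b, g y) :
    HolderWith (eLpNorm g p).toNNReal (1 - p⁻¹).toNNReal v := by
  intro x y
  have hexp : ((1 - p⁻¹).toNNReal : ℝ) = 1 / (1 : ℝ≥0∞).toReal - 1 / p.toReal := by
    rw [ENNReal.coe_toNNReal_eq_toReal,
      ENNReal.toReal_sub_of_le (ENNReal.inv_le_one.2 hp) ENNReal.one_ne_top, ENNReal.toReal_inv]
    simp
  have hlength : volume.restrict (uIoc x y) univ = edist x y := by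
    rw [Measure.restrict_apply_univ, Real.volume_uIoc, edist_comm, edist_dist, Real.dist_eq]
  rw [ENNReal.coe_toNNReal hg.2.ne, hexp, edist_comm, edist_eq_enorm_sub, hv x y]
  calc ‖∫ t in x..y, g t‖ₑ
      ≤ ∫⁻ t in uIoc x y, ‖g t‖ₑ := by
        rw [← enorm_norm, intervalIntegral.norm_intervalIntegral_eq, enorm_norm]
        exact enorm_integral_le_lintegral_enorm _
    _ = eLpNorm g 1 (volume.restrict (uIoc x y)) := eLpNorm_one_eq_lintegral_enorm.symm
    _ ≤ _ := eLpNorm_le_eLpNorm_mul_rpow_measure_univ hp hg.1.restrict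
    _ ≤ _ := by
        rw [hlength]
        gcongr
        exact Measure.restrict_le_self

lemma exists_holderWith_of_sub_eq_intervalIntegral {E : Type*} [NormedAddCommGroup E]
    [NormedSpace ℝ E] {v g : ℝ → E} {p : ℝ≥0∞} (hp : 1 < p) (hg : MemLp g p)
    (hv : ∀ a b, v b - v a = ∫ y in a..b, g y) :
    ∃ C γ : ℝ≥0, 0 < γ ∧ HolderWith C γ v :=
  ⟨_, _, ENNReal.toNNReal_pos (tsub_pos_of_lt (ENNReal.inv_lt_one.2 hp)).ne'
    (ENNReal.sub_ne_top ENNReal.one_ne_top), holderWith_of_sub_eq_intervalIntegral hp.le hg hv⟩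

lemma exists_isEntropySolutionOn {f u₀ : ℝ → ℝ} {u : ℝ → ℝ → ℝ} (hf : LocallyLipschitz f)
    (hu₀m : Measurable u₀) {B M : ℝ} (hu₀bdd : ∀ x, |u₀ x| ≤ B)
    (hum : Measurable (Function.uncurry u)) (hubdd : ∀ t x, 0 ≤ t → |u t x| ≤ M)
    (hK : IsKruzkovSolution f u₀ u) :
    ∃ (L : ℝ≥0) (s : Set ℝ), 0 < L ∧ s.OrdConnected ∧ IsEntropySolutionOn L s f u₀ u := by
  set m := max B M
  obtain ⟨L, hL⟩ := (hf.locallyLipschitzOn (s := Icc (-m) m)).exists_lipschitzOnWith_of_compact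
    isCompact_Icc
  refine ⟨L + 1, Icc (-m) m, by positivity, ordConnected_Icc, ?_⟩
  exact {
    isBounded := Metric.isBounded_Icc _ _
    lipschitzOnWith := hL.weaken (le_add_of_nonneg_right zero_le_one)
    measurable_flux := hf.continuous.measurable
    measurable_init := hu₀m
    init_mem := fun x => abs_le.1 ((hu₀bdd x).trans (le_max_left _ _))
    measurable := hum
    mem := fun t x ht => abs_le.1 ((hubdd t x ht).trans (le_max_right _ _))
    isKruzkovSolution := hK }

theorem stmt1_general
    (f : ℝ → ℝ) (hf : LocallyLipschitz f)
    (u₀ : ℝ → ℝ) (B : ℝ) (hu₀bdd : ∀ x, |u₀ x| ≤ B)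
    (u : ℝ → ℝ → ℝ) (hum : Measurable (Function.uncurry u))
    (hubdd : ∃ M, ∀ t x, 0 ≤ t → |u t x| ≤ M)
    (hK : IsKruzkovSolution f u₀ u) :
    ∃ U α : ℝ → ℝ → ℝ,
      (∀ᵐ q : ℝ × ℝ, 0 ≤ q.1 → u q.1 q.2 = U q.1 (α q.1 q.2)) ∧
      (∀ t, 0 ≤ t → Monotone (α t)) ∧
      (∀ t, 0 ≤ t → ∀ K : Set ℝ, IsCompact K →
        BddAbove (α t '' K) ∧ BddBelow (α t '' K)) ∧
      (∀ t, 0 ≤ t →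
        (Differentiable ℝ u₀ → eVariationOn (deriv u₀) Set.univ ≠ ⊤ →
          ∃ g : ℝ → ℝ,
            (∀ a b : ℝ, U t b - U t a = ∫ s in a..b, g s) ∧
            eVariationOn g Set.univ ≤ eVariationOn (deriv u₀) Set.univ) ∧
        (∀ p : ℝ≥0∞, 1 < p → Differentiable ℝ u₀ →
          eLpNorm (deriv u₀) p volume ≠ ⊤ →
          ∃ g : ℝ → ℝ,
            (∀ a b : ℝ, U t b - U t a = ∫ s in a..b, g s) ∧
            eLpNorm g p volume ≤ eLpNorm (deriv u₀) p volume ∧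
            ∃ (Ch γ : NNReal), 0 < γ ∧ HolderWith Ch γ (U t))) := by
  by_cases hd : Differentiable ℝ u₀
  swap
  · -- Without a derivative of `u₀` there is nothing to bound: `U = u` and `α t = id` will do.
    refine ⟨u, fun _ => id, .of_forall fun _ _ => rfl, fun _ _ => monotone_id, fun t _ K hK => ?_,
      fun t _ => ⟨fun h => absurd h hd, fun p _ h => absurd h hd⟩⟩
    rw [image_id]
    exact ⟨hK.bddAbove, hK.bddBelow⟩
  obtain ⟨M, hM⟩ := hubdd
  obtain ⟨L, s, hL, hs, hu⟩ :=
    exists_isEntropySolutionOn hf hd.continuous.measurable hu₀bdd hum hM hK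
  obtain ⟨α, hα, hae⟩ := hu.exists_monotone_ae_eq hL hd.continuous
  have hftc : (∀ a b, IntervalIntegrable (deriv u₀) volume a b) →
      ∀ a b, u₀ b - u₀ a = ∫ y in a..b, deriv u₀ y := fun hint a b =>
    (intervalIntegral.integral_deriv_eq_sub (fun x _ => hd x) (hint a b)).symm
  refine ⟨fun _ => u₀, α, hae, fun t _ => hα t, fun t _ K hK => ⟨(hα t).map_bddAbove hK.bddAbove,
    (hα t).map_bddBelow hK.bddBelow⟩, fun t _ => ⟨fun _ hbv => ?_, fun p hp _ hLp => ?_⟩⟩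
  · have hbv' : BoundedVariationOn (deriv u₀) univ := hbv
    exact ⟨deriv u₀, hftc fun a b => intervalIntegrable_of_boundedVariationOn
      (hbv'.mono (subset_univ _)), le_rfl⟩
  · have hmem : MemLp (deriv u₀) p :=
      ⟨(measurable_deriv u₀).aestronglyMeasurable, lt_top_iff_ne_top.2 hLp⟩
    have hderiv := hftc (intervalIntegrable_of_memLp hp.le hmem)
    exact ⟨deriv u₀, hderiv, le_rfl, exists_holderWith_of_sub_eq_intervalIntegral hp hmem hderiv⟩

/-- Generalized persistence for a scalar conservation law:
the Kruzkov entropy solution `u` with `u₀ ∈ L^∞` can be represented as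
`u(t,x) = U(t, α(t,x))` with `α(t,·)` locally bounded and monotone increasing,
and `U(t,·)` satisfies `|∂_α U(t,·)|_{BV} ≤ |u₀'|_{BV}` and, for every
`1 < p ≤ ∞`, `|∂_α U(t,·)|_{L^p} ≤ |u₀'|_{L^p}` whenever the right-hand sides
are finite; in the latter case `U(t,·)` is Hölder continuous. (Here `∂_α U(t,·)`
is realized as a function `g` with `U(t,b) - U(t,a) = ∫_a^b g`.) -/
theorem stmt1
    (f : ℝ → ℝ) (hf : ContDiff ℝ (⊤ : ℕ∞) f)
    (u₀ : ℝ → ℝ) (hu₀m : Measurable u₀) (B : ℝ) (hu₀bdd : ∀ x, |u₀ x| ≤ B)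
    (u : ℝ → ℝ → ℝ) (hum : Measurable (Function.uncurry u))
    (hubdd : ∃ M, ∀ t x, 0 ≤ t → |u t x| ≤ M)
    (hK : IsKruzkovSolution f u₀ u) :
    ∃ U α : ℝ → ℝ → ℝ,
      (∀ᵐ q : ℝ × ℝ, 0 ≤ q.1 → u q.1 q.2 = U q.1 (α q.1 q.2)) ∧
      (∀ t, 0 ≤ t → Monotone (α t)) ∧
      (∀ t, 0 ≤ t → ∀ K : Set ℝ, IsCompact K →
        BddAbove (α t '' K) ∧ BddBelow (α t '' K)) ∧
      (∀ t, 0 ≤ t →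
        (Differentiable ℝ u₀ → eVariationOn (deriv u₀) Set.univ ≠ ⊤ →
          ∃ g : ℝ → ℝ,
            (∀ a b : ℝ, U t b - U t a = ∫ s in a..b, g s) ∧
            eVariationOn g Set.univ ≤ eVariationOn (deriv u₀) Set.univ) ∧
        (∀ p : ℝ≥0∞, 1 < p → Differentiable ℝ u₀ →
          eLpNorm (deriv u₀) p volume ≠ ⊤ →
          ∃ g : ℝ → ℝ,
            (∀ a b : ℝ, U t b - U t a = ∫ s in a..b, g s) ∧
            eLpNorm g p volume ≤ eLpNorm (deriv u₀) p volume ∧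
            ∃ (Ch γ : NNReal), 0 < γ ∧ HolderWith Ch γ (U t))) := by
  exact stmt1_general f (contDiff_infty.1 hf 1).locallyLipschitz u₀ B hu₀bdd u hum hubdd hK
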